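/- arXiv:1402.2751 — 2 statements merged into one kernel-verified Lean document; each statement's English description precedes it below -/
import Mathlib

section
/- Suppose L₀ = ℤu ⊕ ℤv is a global minimizer of the Lennard-Jones energy E_LJ among all Bravais lattices of ℝ², where the basis is chosen with ‖u‖ ≤ ‖v‖ and the angle between u and v lying in [π/3, π/2]. Then ‖u‖ < 1 and ‖v‖ ≤ 1. -/
/-!
In terms of the Gram matrix `A = ‖u‖²`, `P = ⟪u, v⟫`, `B = ‖v‖²`, the energy is the sum of
`φ(s) = s⁻⁶ - 2s⁻³` over the nonzero values `s = Q(m, n) = m²A + 2mnP + n²B`, and a global minimizer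
is a minimizing positive definite form.

*Virial identity.* The energy of the dilated lattice `√t L` is `t⁻⁶ Σ Q⁻⁶ - 2 t⁻³ Σ Q⁻³`, and it is
minimal at `t = 1`. Hence `Σ (Q⁻³ - Q⁻⁶) = 0` (`IsMinForm.tsum_eq_zero`).

*The bound `‖u‖ < 1`.* If `‖u‖ ≥ 1`, a reduced lattice has `Q ≥ 1` off the origin, so the terms
`Q⁻³ - Q⁻⁶` are nonnegative and one of them is positive (`ReducedForm.length_lt_one`).

*The bound `‖v‖ ≤ 1`.* Suppose `‖v‖ > 1`. The term of the virial identity at `u` is very negative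
when `‖u‖` is small, while the others are controlled by `ζ(3)` and `ζ(6)`; this gives `‖u‖ > 17/20`.
With that bound, if `w = v - u` were longer than `1`, all vectors outside `ℤu` would be longer than
`1` and compressing the lattice orthogonally to `u` would lower the energy, `φ` being increasing on
`[1, ∞)`. So `‖w‖ ≤ 1` (`ReducedForm.diff_le_one`), and the virial identity then improves to
`‖u‖ > 10/11`. The lattice is now close to the triangular one of side `1`. Lower `‖u + w‖² = B` to
`1`, with `‖u‖` and `‖w‖` fixed. The squared lengths of `mu + nw` and `mu - nw` change by opposite
amounts, and the concavity of `φ` on `[5/4, ∞)` makes the change of energy nonpositive on each such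
pair with `|mn| ≥ 2`. The pairs `(1, 1)`, `(2, 1)`, `(1, 2)` together give a strict decrease
(`not_isMinForm_of_near`), contradicting minimality.
-/

noncomputable section
open Real

abbrev R2 := EuclideanSpace ℝ (Fin 2)

def vec2 (x y : ℝ) : R2 := (WithLp.equiv 2 (Fin 2 → ℝ)).symm ![x, y]

/-- `L` is the Bravais lattice generated by the basis `(u, v)` of `ℝ²`. -/
def LatticeBasis (L : Set R2) (u v : R2) : Prop :=
  LinearIndependent ℝ ![u, v] ∧
    L = {x : R2 | ∃ m n : ℤ, x = (m : ℝ) • u + (n : ℝ) • v}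

/-- `L` is a Bravais lattice of `ℝ²`. -/
def IsBravais (L : Set R2) : Prop := ∃ u v : R2, LatticeBasis L u v

/-- The area `|L| = ‖u‖‖v‖|sin θ|` of a Bravais lattice. -/
def HasArea (L : Set R2) (A : ℝ) : Prop :=
  ∃ u v : R2, LatticeBasis L u v ∧
    ‖u‖ * ‖v‖ * |Real.sin (InnerProductGeometry.angle u v)| = A

/-- The Lennard-Jones potential. -/
def VLJ (r : ℝ) : ℝ := r ^ (-12 : ℤ) - 2 * r ^ (-6 : ℤ)

/-- The Lennard-Jones energy of a lattice. -/
def ELJ (L : Set R2) : ℝ := ∑' x : {x : R2 // x ∈ L ∧ x ≠ 0}, VLJ ‖(x : R2)‖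

/-- The Epstein zeta function of a lattice. -/
def zetaL (L : Set R2) (s : ℝ) : ℝ := ∑' x : {x : R2 // x ∈ L ∧ x ≠ 0}, ‖(x : R2)‖ ^ (-s)

/-- The theta function of a lattice. -/
def thetaL (L : Set R2) (α : ℝ) : ℝ := ∑' x : L, Real.exp (-2 * π * α * ‖(x : R2)‖ ^ 2)

/-- The triangular lattice of area `A`. -/
def triLattice (A : ℝ) : Set R2 :=
  {x : R2 | ∃ m n : ℤ, x =
      (m : ℝ) • (Real.sqrt (2 * A / Real.sqrt 3) • vec2 1 0) +
      (n : ℝ) • (Real.sqrt (2 * A / Real.sqrt 3) • vec2 (1/2) (Real.sqrt 3 / 2))}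

/-- `L` is the image of `M` under a linear isometry of `ℝ²`. -/
def IsRotationOf (L M : Set R2) : Prop := ∃ f : R2 ≃ₗᵢ[ℝ] R2, L = f '' M

/-! ### The energy as a function of the Gram matrix -/

/-- The quadratic form `m²A + 2mnP + n²B`, that is `‖mu + nv‖²` when `A = ‖u‖²`, `P = ⟪u, v⟫`,
`B = ‖v‖²`. -/
def qf (A P B : ℝ) (p : ℤ × ℤ) : ℝ := (p.1 : ℝ) ^ 2 * A + 2 * p.1 * p.2 * P + (p.2 : ℝ) ^ 2 * B

/-- The Lennard-Jones potential as a function of the squared distance. Its junk value at `0` is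
`0`, so that energies can be summed over all of `ℤ × ℤ`. -/
def potSq (s : ℝ) : ℝ := (s ^ 6)⁻¹ - 2 * (s ^ 3)⁻¹

/-- The Lennard-Jones energy of a lattice with Gram matrix `(A, P; P, B)`. -/
def formEnergy (A P B : ℝ) : ℝ := ∑' p : ℤ × ℤ, potSq (qf A P B p)

lemma potSq_eq (s : ℝ) : potSq s = ((s ^ 3)⁻¹ - 1) ^ 2 - 1 := by
  have h : (s ^ 6)⁻¹ = ((s ^ 3)⁻¹) ^ 2 := by rw [inv_pow, ← pow_mul]
  rw [potSq, h]; ring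

lemma VLJ_eq (r : ℝ) : VLJ r = potSq (r ^ 2) := by
  have h1 : r ^ (-12 : ℤ) = (r ^ 12)⁻¹ := by rw [zpow_neg]; norm_cast
  have h2 : r ^ (-6 : ℤ) = (r ^ 6)⁻¹ := by rw [zpow_neg]; norm_cast
  rw [VLJ, potSq, h1, h2, ← pow_mul, ← pow_mul]

lemma norm_sq_comb (u v : R2) (p : ℤ × ℤ) :
    ‖(p.1 : ℝ) • u + (p.2 : ℝ) • v‖ ^ 2 = qf (‖u‖ ^ 2) (inner ℝ u v) (‖v‖ ^ 2) p := by
  rw [norm_add_sq_real, norm_smul, norm_smul, inner_smul_left, inner_smul_right, mul_pow, mul_pow,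
    Real.norm_eq_abs, Real.norm_eq_abs, sq_abs, sq_abs, qf]
  simp only [conj_trivial]
  ring

lemma ELJ_eq_formEnergy {L : Set R2} {u v : R2} (h : LatticeBasis L u v) :
    ELJ L = formEnergy (‖u‖ ^ 2) (inner ℝ u v) (‖v‖ ^ 2) := by
  obtain ⟨hli, rfl⟩ := h
  rw [LinearIndependent.pair_iff] at hli
  set φ : ℤ × ℤ → R2 := fun p => (p.1 : ℝ) • u + (p.2 : ℝ) • v with hφ
  have hinj : Function.Injective φ := by
    intro p q hpq
    have h0 : ((p.1 : ℝ) - q.1) • u + ((p.2 : ℝ) - q.2) • v = 0 := by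
      have : φ p - φ q = 0 := sub_eq_zero.2 hpq
      rw [← this]; simp only [hφ]; module
    obtain ⟨h1, h2⟩ := hli _ _ h0
    have h1' : (p.1 : ℝ) = q.1 := by linarith
    have h2' : (p.2 : ℝ) = q.2 := by linarith
    exact Prod.ext (by exact_mod_cast h1') (by exact_mod_cast h2')
  have hV0 : VLJ ‖(0 : R2)‖ = 0 := by rw [VLJ_eq]; simp [potSq]
  set S : Set R2 := {x | x ∈ {x : R2 | ∃ m n : ℤ, x = (m : ℝ) • u + (n : ℝ) • v} ∧ x ≠ 0}
  have hsupp : Function.support (S.indicator fun x => VLJ ‖x‖) ⊆ Set.range φ := by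
    intro x hx
    have hxS : x ∈ S := Set.mem_of_indicator_ne_zero hx
    obtain ⟨⟨m, n, hmn⟩, -⟩ := hxS
    exact ⟨(m, n), hmn.symm⟩
  have h1 : ELJ {x : R2 | ∃ m n : ℤ, x = (m : ℝ) • u + (n : ℝ) • v}
      = ∑' x, S.indicator (fun x => VLJ ‖x‖) x := tsum_subtype S (fun x => VLJ ‖x‖)
  rw [h1, ← hinj.tsum_eq hsupp, formEnergy]
  refine tsum_congr fun p => ?_
  have h2 : S.indicator (fun x => VLJ ‖x‖) (φ p) = VLJ ‖φ p‖ := by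
    by_cases h0 : φ p = 0
    · rw [h0, hV0]
      exact Set.indicator_of_notMem (s := S) (fun h => h.2 rfl) _
    · exact Set.indicator_of_mem (s := S) ⟨⟨p.1, p.2, rfl⟩, h0⟩ _
  rw [h2, VLJ_eq, norm_sq_comb]

/-- Every positive definite form is the Gram form of a Bravais lattice. -/
lemma exists_bravais {A P B : ℝ} (hA : 0 < A) (hd : P ^ 2 < A * B) :
    ∃ L, IsBravais L ∧ ELJ L = formEnergy A P B := by
  set a := √A
  have ha : 0 < a := Real.sqrt_pos.2 hA
  have ha2 : a ^ 2 = A := Real.sq_sqrt hA.le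
  have hc' : 0 < B - P ^ 2 / A := by
    rw [sub_pos, div_lt_iff₀ hA]; linarith
  set c := √(B - P ^ 2 / A)
  have hc : 0 < c := Real.sqrt_pos.2 hc'
  have hc2 : c ^ 2 = B - P ^ 2 / A := Real.sq_sqrt hc'.le
  set u : R2 := !₂[a, 0]
  set v : R2 := !₂[P / a, c]
  have hL : LatticeBasis {x : R2 | ∃ m n : ℤ, x = (m : ℝ) • u + (n : ℝ) • v} u v := by
    refine ⟨?_, rfl⟩
    rw [LinearIndependent.pair_iff]
    intro s t hst
    have h0 := congrArg (fun x : R2 => x 0) hst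
    have h1 := congrArg (fun x : R2 => x 1) hst
    simp [u, v] at h0 h1
    have ht : t = 0 := h1.resolve_right hc.ne'
    subst ht
    simp at h0
    exact ⟨h0.resolve_right ha.ne', rfl⟩
  refine ⟨_, ⟨u, v, hL⟩, ?_⟩
  rw [ELJ_eq_formEnergy hL]
  have hu : ‖u‖ ^ 2 = A := by
    rw [EuclideanSpace.norm_sq_eq, Fin.sum_univ_two]; simp [u, ha2]
  have hv : ‖v‖ ^ 2 = B := by
    rw [EuclideanSpace.norm_sq_eq, Fin.sum_univ_two]; simp [v, hc2, div_pow, ha2]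
  have huv : inner ℝ u v = P := by
    simp [u, v, PiLp.inner_apply, Fin.sum_univ_two]
    field_simp
  rw [hu, hv, huv]

/-! ### Convergence of the lattice sums -/

lemma qf_lower {A P B : ℝ} (hA : 0 < A) (hd : P ^ 2 < A * B) :
    ∃ κ > 0, ∀ p : ℤ × ℤ, κ * ((p.1 : ℝ) ^ 2 + (p.2 : ℝ) ^ 2) ≤ qf A P B p := by
  have hB : 0 < B := by nlinarith [sq_nonneg P]
  refine ⟨(A * B - P ^ 2) / (A + B), by apply div_pos <;> linarith, fun p => ?_⟩
  rw [div_mul_eq_mul_div, div_le_iff₀ (by linarith), qf]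
  nlinarith [sq_nonneg ((p.1 : ℝ) * A + P * p.2), sq_nonneg ((p.1 : ℝ) * P + B * p.2)]

lemma one_le_sq_add_sq {p : ℤ × ℤ} (hp : p ≠ 0) : (1 : ℝ) ≤ (p.1 : ℝ) ^ 2 + (p.2 : ℝ) ^ 2 := by
  have : 1 ≤ p.1 ^ 2 + p.2 ^ 2 := by
    by_contra! h
    have h1 : p.1 ^ 2 = 0 := by nlinarith [sq_nonneg p.1, sq_nonneg p.2]
    have h2 : p.2 ^ 2 = 0 := by nlinarith [sq_nonneg p.1, sq_nonneg p.2]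
    exact hp (Prod.ext (by simpa using h1) (by simpa using h2))
  exact_mod_cast this

lemma qf_pos {A P B : ℝ} (hA : 0 < A) (hd : P ^ 2 < A * B) {p : ℤ × ℤ} (hp : p ≠ 0) :
    0 < qf A P B p := by
  obtain ⟨κ, hκ, h⟩ := qf_lower hA hd
  have := one_le_sq_add_sq hp
  exact lt_of_lt_of_le (by positivity) (h p)

lemma qf_zero (A P B : ℝ) : qf A P B 0 = 0 := by simp [qf]

lemma summable_one_add_sq : Summable fun m : ℤ => (1 + (m : ℝ) ^ 2)⁻¹ := by
  have h : Summable fun m : ℤ => 1 / (m : ℝ) ^ 2 := Real.summable_one_div_int_pow.2 (by norm_num)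
  have h2 : Summable fun m : ℤ => if m = 0 then (1 : ℝ) else 0 :=
    summable_of_ne_finset_zero (s := {0}) (by intro b hb; simp at hb; simp [hb])
  refine Summable.of_nonneg_of_le (fun m => by positivity) (fun m => ?_) (h.add h2)
  by_cases hm : m = 0
  · simp [hm]
  · have : (0 : ℝ) < (m : ℝ) ^ 2 := by positivity
    rw [if_neg hm, add_zero, one_div]
    exact inv_anti₀ this (by linarith)

/-- The estimate `(1 + m²)(1 + n²) ≤ 3 (m² + n²)²` reduces convergence to that of a product of
one-dimensional sums. -/
lemma summable_qf_pow {A P B : ℝ} (hA : 0 < A) (hd : P ^ 2 < A * B) {k : ℕ} (hk : 2 ≤ k) :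
    Summable fun p : ℤ × ℤ => (qf A P B p ^ k)⁻¹ := by
  obtain ⟨κ, hκ, h⟩ := qf_lower hA hd
  have hs := (summable_one_add_sq.mul_of_nonneg summable_one_add_sq
    (fun m => by positivity) (fun m => by positivity)).mul_left ((κ ^ k)⁻¹ * 3)
  refine Summable.of_nonneg_of_le (fun p => ?_) (fun p => ?_) hs
  · by_cases hp : p = 0
    · rw [hp, qf_zero]; positivity
    · have := qf_pos hA hd hp; positivity
  · by_cases hp : p = 0
    · rw [hp, qf_zero, zero_pow (by omega)]
      simp only [inv_zero]; positivity
    · have h1 := one_le_sq_add_sq hp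
      have h2 := h p
      set N := (p.1 : ℝ) ^ 2 + (p.2 : ℝ) ^ 2
      have h3 : κ ^ k * N ^ 2 ≤ qf A P B p ^ k := by
        calc κ ^ k * N ^ 2 ≤ κ ^ k * N ^ k := by gcongr
          _ = (κ * N) ^ k := (mul_pow _ _ _).symm
          _ ≤ _ := by gcongr
      have h4 : (1 + (p.1 : ℝ) ^ 2) * (1 + (p.2 : ℝ) ^ 2) ≤ 3 * N ^ 2 := by
        simp only [N] at *
        nlinarith [sq_nonneg (p.1 : ℝ), sq_nonneg (p.2 : ℝ),
          mul_nonneg (sq_nonneg (p.1 : ℝ)) (sq_nonneg (p.2 : ℝ))]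
      have h5 : (κ ^ k)⁻¹ * 3 * ((1 + (p.1 : ℝ) ^ 2)⁻¹ * (1 + (p.2 : ℝ) ^ 2)⁻¹)
          = (κ ^ k * ((1 + (p.1 : ℝ) ^ 2) * (1 + (p.2 : ℝ) ^ 2)) / 3)⁻¹ := by
        field_simp
      rw [h5]
      apply inv_anti₀ (by positivity)
      refine le_trans ?_ h3
      have : 0 < κ ^ k := by positivity
      nlinarith

lemma summable_potSq {A P B : ℝ} (hA : 0 < A) (hd : P ^ 2 < A * B) :
    Summable fun p : ℤ × ℤ => potSq (qf A P B p) :=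
  (summable_qf_pow hA hd (by norm_num)).sub ((summable_qf_pow hA hd (by norm_num)).mul_left 2)

/-! ### Minimality under scaling -/

/-- `(A, P; P, B)` minimizes the energy among positive definite forms. -/
def IsMinForm (A P B : ℝ) : Prop :=
  ∀ A' P' B' : ℝ, 0 < A' → P' ^ 2 < A' * B' → formEnergy A P B ≤ formEnergy A' P' B'

/-- The virial identity: along the scalings of a lattice the energy is `τ²Z₁₂ - 2τZ₆`, and its
minimum is attained at `τ = 1`, so that `Z₁₂ = Z₆`. -/
lemma IsMinForm.tsum_eq_zero {A P B : ℝ} (h : IsMinForm A P B) (hA : 0 < A)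
    (hd : P ^ 2 < A * B) :
    ∑' p : ℤ × ℤ, ((qf A P B p ^ 3)⁻¹ - (qf A P B p ^ 6)⁻¹) = 0 := by
  have s3 := summable_qf_pow hA hd (k := 3) (by norm_num)
  have s6 := summable_qf_pow hA hd (k := 6) (by norm_num)
  have hpos : ∀ (k : ℕ), 2 ≤ k → 0 < ∑' p : ℤ × ℤ, (qf A P B p ^ k)⁻¹ := by
    intro k hk
    refine (summable_qf_pow hA hd hk).tsum_pos (fun p => ?_) (1, 0) ?_
    · by_cases hp : p = 0
      · rw [hp, qf_zero]; positivity
      · have := qf_pos hA hd hp; positivity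
    · have := qf_pos hA hd (p := (1, 0)) (by decide); positivity
  rw [s3.tsum_sub s6]
  have p3 := hpos 3 (by norm_num)
  have p6 := hpos 6 (by norm_num)
  set Z6 := ∑' p : ℤ × ℤ, (qf A P B p ^ 3)⁻¹ with hZ6
  set Z12 := ∑' p : ℤ × ℤ, (qf A P B p ^ 6)⁻¹ with hZ12
  have hE : formEnergy A P B = Z12 - 2 * Z6 := by
    simp only [formEnergy, potSq]
    rw [s6.tsum_sub (s3.mul_left 2), tsum_mul_left]
  set τ := Z6 / Z12 with hτ
  have τpos : 0 < τ := div_pos p3 p6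
  set t := (τ⁻¹) ^ (1 / 3 : ℝ)
  have tpos : 0 < t := by positivity
  have ht : (t ^ 3)⁻¹ = τ := by
    have : t ^ 3 = τ⁻¹ := by
      rw [← Real.rpow_natCast, ← Real.rpow_mul (by positivity)]; norm_num
    rw [this, inv_inv]
  have ht6 : (t ^ 6)⁻¹ = τ ^ 2 := by
    rw [← ht]; field_simp
  have hE' : formEnergy (t * A) (t * P) (t * B) = τ ^ 2 * Z12 - 2 * (τ * Z6) := by
    have hq : ∀ p, potSq (qf (t * A) (t * P) (t * B) p)
        = τ ^ 2 * (qf A P B p ^ 6)⁻¹ - 2 * (τ * (qf A P B p ^ 3)⁻¹) := by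
      intro p
      have : qf (t * A) (t * P) (t * B) p = t * qf A P B p := by simp only [qf]; ring
      rw [potSq, this, mul_pow, mul_pow, mul_inv, mul_inv, ht, ht6]
    simp only [formEnergy, hq]
    rw [(s6.mul_left _).tsum_sub ((s3.mul_left _).mul_left 2), tsum_mul_left, tsum_mul_left,
      tsum_mul_left]
  have hmin := h (t * A) (t * P) (t * B) (by positivity) (by nlinarith [mul_pos tpos tpos])
  rw [hE, hE'] at hmin
  have h1 : τ * Z12 = Z6 := by rw [hτ]; field_simp
  have h2 : τ ^ 2 * Z12 = τ * Z6 := by rw [pow_two, mul_assoc, h1]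
  have h3 : (1 - τ) ^ 2 * Z12 ≤ 0 := by nlinarith
  have h4 : 1 - τ = 0 := by
    by_contra hne
    have : 0 < (1 - τ) ^ 2 * Z12 := by positivity
    linarith
  have : τ = 1 := by linarith
  rw [this] at h1
  linarith
/-! ### Lower bounds on the shortest vector -/

/-- `|k|⁻ʲ`, extended by `0` at `k = 0`. -/
def absInvPow (j : ℕ) (k : ℤ) : ℝ := (|(k : ℝ)| ^ j)⁻¹

lemma absInvPow_nonneg (j : ℕ) (k : ℤ) : 0 ≤ absInvPow j k := by
  unfold absInvPow; positivity

/-- The partial sums of `ζ(3)` telescope, since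
`1 / k³ ≤ (1 / (k (k - 1)) - 1 / (k (k + 1))) / 2`. -/
lemma sum_inv_cube_le (N : ℕ) :
    ∑ i ∈ Finset.range (N + 1), (((i : ℝ) + 1) ^ 3)⁻¹ ≤
      5 / 4 - 1 / (2 * ((N : ℝ) + 1) * (N + 2)) := by
  induction N with
  | zero => norm_num
  | succ n ih =>
    rw [Finset.sum_range_succ]
    push_cast
    have h : (((n : ℝ) + 1 + 1) ^ 3)⁻¹ ≤
        1 / (2 * ((n : ℝ) + 1) * (n + 2)) - 1 / (2 * ((n : ℝ) + 1 + 1) * (n + 1 + 2)) := by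
      have : 1 / (2 * ((n : ℝ) + 1) * (n + 2)) - 1 / (2 * ((n : ℝ) + 1 + 1) * (n + 1 + 2))
          = 1 / (((n : ℝ) + 1) * (n + 2) * (n + 3)) := by
        field_simp; ring
      rw [this, ← one_div]
      apply one_div_le_one_div_of_le (by positivity)
      have : (0 : ℝ) ≤ n := by positivity
      nlinarith
    linarith

lemma sum_inv_cube_le' (N : ℕ) :
    ∑ i ∈ Finset.range N, (((i : ℝ) + 1) ^ 3)⁻¹ ≤ 5 / 4 := by
  cases N with
  | zero => norm_num
  | succ n =>
    have := sum_inv_cube_le n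
    have h : (0 : ℝ) ≤ 1 / (2 * ((n : ℝ) + 1) * (n + 2)) := by positivity
    linarith

lemma sum_inv_six_le (N : ℕ) :
    ∑ i ∈ Finset.range N, (((i : ℝ) + 1) ^ 6)⁻¹ ≤ 33 / 32 := by
  have h : ∀ i : ℕ, (((i : ℝ) + 1) ^ 6)⁻¹ ≤
      1 / 8 * (((i : ℝ) + 1) ^ 3)⁻¹ + if i = 0 then 7 / 8 else 0 := by
    intro i
    rcases Nat.eq_zero_or_pos i with rfl | hi
    · norm_num
    · rw [if_neg hi.ne', add_zero]
      have h1 : (1 : ℝ) ≤ i := by exact_mod_cast hi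
      have h2 : (8 : ℝ) ≤ ((i : ℝ) + 1) ^ 3 := by
        calc (8 : ℝ) = 2 ^ 3 := by norm_num
          _ ≤ _ := by gcongr; linarith
      have h3 : (((i : ℝ) + 1) ^ 6)⁻¹ = (((i : ℝ) + 1) ^ 3)⁻¹ * (((i : ℝ) + 1) ^ 3)⁻¹ := by
        rw [← mul_inv]; ring_nf
      rw [h3]
      gcongr
      rw [one_div]
      exact inv_anti₀ (by norm_num) h2
  calc _ ≤ ∑ i ∈ Finset.range N,
        (1 / 8 * (((i : ℝ) + 1) ^ 3)⁻¹ + if i = 0 then 7 / 8 else 0) :=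
        Finset.sum_le_sum fun i _ => h i
    _ ≤ 33 / 32 := by
      rw [Finset.sum_add_distrib, ← Finset.mul_sum, Finset.sum_ite_eq']
      have := sum_inv_cube_le' N
      split_ifs <;> linarith

lemma tsum_absInvPow_le {j : ℕ} (hj : 1 < j) {c : ℝ}
    (h : ∀ N : ℕ, ∑ i ∈ Finset.range N, (((i : ℝ) + 1) ^ j)⁻¹ ≤ c) :
    Summable (absInvPow j) ∧ ∑' k, absInvPow j k ≤ 2 * c := by
  have hs : Summable fun n : ℕ => ((n : ℝ) ^ j)⁻¹ := Real.summable_nat_pow_inv.2 hj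
  have hs1 : Summable fun n : ℕ => (((n : ℝ) + 1) ^ j)⁻¹ := by
    have := (summable_nat_add_iff 1).2 hs
    simpa using this
  have e1 : (fun n : ℕ => absInvPow j n) = fun n : ℕ => ((n : ℝ) ^ j)⁻¹ := by
    funext n; simp [absInvPow]
  have e2 : (fun n : ℕ => absInvPow j (-((n : ℤ) + 1))) = fun n : ℕ => (((n : ℝ) + 1) ^ j)⁻¹ := by
    funext n
    have : |(-((n : ℝ) + 1))| = n + 1 := by rw [abs_neg, abs_of_nonneg (by positivity)]
    simp only [absInvPow]; push_cast
    rw [this]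
  have g1 : Summable fun n : ℕ => absInvPow j n := by rw [e1]; exact hs
  have g2 : Summable fun n : ℕ => absInvPow j (-((n : ℤ) + 1)) := by rw [e2]; exact hs1
  refine ⟨Summable.of_nat_of_neg_add_one g1 g2, ?_⟩
  have b : ∑' n : ℕ, (((n : ℝ) + 1) ^ j)⁻¹ ≤ c :=
    Real.tsum_le_of_sum_range_le (fun n => by positivity) h
  have b0 : ∑' n : ℕ, ((n : ℝ) ^ j)⁻¹ = ∑' n : ℕ, (((n : ℝ) + 1) ^ j)⁻¹ := by
    rw [hs.tsum_eq_zero_add]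
    simp [show j ≠ 0 by omega]
  rw [tsum_of_nat_of_neg_add_one g1 g2, e1, e2, b0]
  linarith

/-- Reflection of the second index. -/
def negSnd : ℤ × ℤ ≃ ℤ × ℤ := (Equiv.refl ℤ).prodCongr (Equiv.neg ℤ)

lemma negSnd_apply (m n : ℤ) : negSnd (m, n) = (m, -n) := rfl

lemma tsum_add_negSnd {f : ℤ × ℤ → ℝ} (hf : Summable f) :
    Summable (fun p => f p + f (negSnd p)) ∧ ∑' p, (f p + f (negSnd p)) = 2 * ∑' p, f p := by
  have h : Summable fun p => f (negSnd p) := negSnd.summable_iff.2 hf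
  refine ⟨hf.add h, ?_⟩
  rw [hf.tsum_add h, negSnd.tsum_eq]; ring

/-- The majorant of `Q⁻³(m, n) + Q⁻³(m, -n)` used to bound the shortest vector; `X` stands for
`‖u‖⁻³`. -/
def majorant (X : ℝ) (p : ℤ × ℤ) : ℝ :=
  9 / 8 * X * (absInvPow 3 p.1 * absInvPow 3 p.2) +
    2 * X ^ 2 * (absInvPow 6 p.1 * if p.2 = 0 then 1 else 0) +
    2 * ((if p.1 = 0 then 1 else 0) * absInvPow 6 p.2)

lemma tsum_majorant_le {X : ℝ} (hX : 0 ≤ X) :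
    Summable (majorant X) ∧
      ∑' p, majorant X p ≤ 225 / 32 * X + 33 / 8 * X ^ 2 + 33 / 8 := by
  obtain ⟨s3, b3⟩ := tsum_absInvPow_le (j := 3) (by norm_num) sum_inv_cube_le'
  obtain ⟨s6, b6⟩ := tsum_absInvPow_le (j := 6) (by norm_num) sum_inv_six_le
  have se : Summable fun m : ℤ => if m = 0 then (1 : ℝ) else 0 :=
    summable_of_ne_finset_zero (s := {0}) (by intro b hb; simp at hb; simp [hb])
  have te : ∑' m : ℤ, (if m = 0 then (1 : ℝ) else 0) = 1 := tsum_ite_eq 0 _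
  have pe : (0 : ℤ → ℝ) ≤ fun m : ℤ => if m = 0 then (1 : ℝ) else 0 := by
    intro m; dsimp; split_ifs <;> norm_num
  have t1 := s3.mul_of_nonneg s3 (absInvPow_nonneg 3) (absInvPow_nonneg 3)
  have t2 := s6.mul_of_nonneg se (absInvPow_nonneg 6) pe
  have t3 := se.mul_of_nonneg s6 pe (absInvPow_nonneg 6)
  have S := ((t1.mul_left (9 / 8 * X)).add (t2.mul_left (2 * X ^ 2))).add (t3.mul_left 2)
  refine ⟨S, ?_⟩
  have e1 := s3.tsum_mul_tsum s3 t1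
  have e2 := s6.tsum_mul_tsum se t2
  have e3 := se.tsum_mul_tsum s6 t3
  rw [te] at e2 e3
  have hS : ∑' p, majorant X p = 9 / 8 * X * ∑' p : ℤ × ℤ, absInvPow 3 p.1 * absInvPow 3 p.2 +
      2 * X ^ 2 * ∑' p : ℤ × ℤ, (absInvPow 6 p.1 * if p.2 = 0 then 1 else 0) +
      2 * ∑' p : ℤ × ℤ, ((if p.1 = 0 then 1 else 0) * absInvPow 6 p.2) := by
    unfold majorant
    rw [((t1.mul_left (9 / 8 * X)).add (t2.mul_left (2 * X ^ 2))).tsum_add (t3.mul_left 2),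
      (t1.mul_left (9 / 8 * X)).tsum_add (t2.mul_left (2 * X ^ 2)), tsum_mul_left,
      tsum_mul_left, tsum_mul_left]
  rw [hS, ← e1, ← e2, ← e3]
  have n3 : 0 ≤ ∑' k, absInvPow 3 k := tsum_nonneg (absInvPow_nonneg 3)
  have h33 : (∑' k, absInvPow 3 k) * (∑' k, absInvPow 3 k) ≤ 5 / 2 * (5 / 2) := by
    gcongr <;> linarith
  have h1 : 9 / 8 * X * ((∑' k, absInvPow 3 k) * (∑' k, absInvPow 3 k))
      ≤ 9 / 8 * X * (5 / 2 * (5 / 2)) := by gcongr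
  have h2 : 2 * X ^ 2 * ((∑' k, absInvPow 6 k) * 1) ≤ 2 * X ^ 2 * (33 / 16) := by
    gcongr; linarith
  linarith

/-- A reduced form `m²A + 2mnP + n²B` in the sense of Engel: `A` and `B` are the squares of the
lengths `a ≤ b`, and `0 ≤ P ≤ ab / 2` says that the angle lies in `[π/3, π/2]`. -/
structure ReducedForm (a b P : ℝ) : Prop where
  pos : 0 < a
  le : a ≤ b
  nonneg : 0 ≤ P
  le_half : 2 * P ≤ a * b

namespace ReducedForm

variable {a b P : ℝ}

lemma disc (h : ReducedForm a b P) : P ^ 2 < a ^ 2 * b ^ 2 := by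
  have h1 := h.pos
  have h2 := h.le
  have h3 := h.nonneg
  have h4 := h.le_half
  have : 0 < a * b := by nlinarith
  nlinarith

lemma inv_cube_le (h : ReducedForm a b P) (hb : 1 ≤ b) {m n : ℤ} (hm : m ≠ 0) (hn : n ≠ 0) :
    (qf (a ^ 2) P (b ^ 2) (m, n) ^ 3)⁻¹ + (qf (a ^ 2) P (b ^ 2) (m, -n) ^ 3)⁻¹ ≤
      9 / 8 * (a⁻¹ ^ 3) * (absInvPow 3 m * absInvPow 3 n) := by
  have ha := h.pos
  set M : ℝ := |(m : ℝ)| with hM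
  set N : ℝ := |(n : ℝ)| with hN
  have hMp : 0 < M := by positivity
  have hNp : 0 < N := by positivity
  have hMs : M ^ 2 = (m : ℝ) ^ 2 := sq_abs _
  have hNs : N ^ 2 = (n : ℝ) ^ 2 := sq_abs _
  -- the larger and the smaller of the two values, by the inequality of the two means
  have key1 : 2 * (M * N * a) ≤ M ^ 2 * a ^ 2 + N ^ 2 * b ^ 2 + 2 * (M * N) * P := by
    have := h.nonneg
    have : 0 ≤ M * N * P := by positivity
    have : 0 ≤ M * N * a * (b - 1) := by
      have : 0 ≤ b - 1 := by linarith
      positivity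
    nlinarith [sq_nonneg (M * a - N * b)]
  have key2 : M * N * a ≤ M ^ 2 * a ^ 2 + N ^ 2 * b ^ 2 - 2 * (M * N) * P := by
    have : 0 ≤ M * N * (a * b - 2 * P) := by
      have := h.le_half
      have : 0 ≤ a * b - 2 * P := by linarith
      positivity
    have : 0 ≤ M * N * a * (b - 1) := by
      have : 0 ≤ b - 1 := by linarith
      positivity
    nlinarith [sq_nonneg (M * a - N * b)]
  have hY : 0 < M * N * a := by positivity
  have i1 : ((M ^ 2 * a ^ 2 + N ^ 2 * b ^ 2 + 2 * (M * N) * P) ^ 3)⁻¹ ≤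
      ((2 * (M * N * a)) ^ 3)⁻¹ := inv_anti₀ (by positivity) (by gcongr)
  have i2 : ((M ^ 2 * a ^ 2 + N ^ 2 * b ^ 2 - 2 * (M * N) * P) ^ 3)⁻¹ ≤
      ((M * N * a) ^ 3)⁻¹ := inv_anti₀ (by positivity) (by gcongr)
  have e : 9 / 8 * (a⁻¹ ^ 3) * (absInvPow 3 m * absInvPow 3 n) =
      ((2 * (M * N * a)) ^ 3)⁻¹ + ((M * N * a) ^ 3)⁻¹ := by
    simp only [absInvPow, ← hM, ← hN]
    field_simp; norm_num
  rw [e]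
  have q1 : qf (a ^ 2) P (b ^ 2) (m, n) = M ^ 2 * a ^ 2 + N ^ 2 * b ^ 2 + 2 * (m * n) * P := by
    rw [hMs, hNs]; simp only [qf]; ring
  have q2 : qf (a ^ 2) P (b ^ 2) (m, -n) = M ^ 2 * a ^ 2 + N ^ 2 * b ^ 2 - 2 * (m * n) * P := by
    rw [hMs, hNs]; simp only [qf]; push_cast; ring
  have hMN : M * N = |(m : ℝ) * n| := (abs_mul _ _).symm
  rw [q1, q2]
  rcases abs_choice ((m : ℝ) * n) with h0 | h0 <;> rw [← hMN] at h0
  · rw [← h0]; linarith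
  · have : (m : ℝ) * n = -(M * N) := by linarith
    rw [this]
    have e1 : M ^ 2 * a ^ 2 + N ^ 2 * b ^ 2 + 2 * -(M * N) * P
      = M ^ 2 * a ^ 2 + N ^ 2 * b ^ 2 - 2 * (M * N) * P := by ring
    have e2 : M ^ 2 * a ^ 2 + N ^ 2 * b ^ 2 - 2 * -(M * N) * P
      = M ^ 2 * a ^ 2 + N ^ 2 * b ^ 2 + 2 * (M * N) * P := by ring
    rw [e1, e2]; linarith

/-- The summand of the virial identity, symmetrized, lies below the majorant. -/
lemma le_majorant (h : ReducedForm a b P) (hb : 1 ≤ b) (p : ℤ × ℤ) :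
    (qf (a ^ 2) P (b ^ 2) p ^ 3)⁻¹ - (qf (a ^ 2) P (b ^ 2) p ^ 6)⁻¹ +
      ((qf (a ^ 2) P (b ^ 2) (negSnd p) ^ 3)⁻¹ - (qf (a ^ 2) P (b ^ 2) (negSnd p) ^ 6)⁻¹) ≤
      majorant (a⁻¹ ^ 3) p := by
  have ha := h.pos
  have pos6 : ∀ q, 0 ≤ (qf (a ^ 2) P (b ^ 2) q ^ 6)⁻¹ := fun q => by positivity
  suffices (qf (a ^ 2) P (b ^ 2) p ^ 3)⁻¹ + (qf (a ^ 2) P (b ^ 2) (negSnd p) ^ 3)⁻¹ ≤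
      majorant (a⁻¹ ^ 3) p by
    have := pos6 p; have := pos6 (negSnd p); linarith
  obtain ⟨m, n⟩ := p
  rw [negSnd_apply]
  by_cases hm : m = 0
  · by_cases hn : n = 0
    · simp [hm, hn, qf, majorant, absInvPow]
    · subst hm
      have hn' : (n : ℝ) ^ 2 ≠ 0 := by positivity
      have e : (|(n : ℝ)| ^ 6) = ((n : ℝ) ^ 2) ^ 3 := by rw [← sq_abs]; ring
      have : ((n ^ 2 * b ^ 2 : ℝ) ^ 3)⁻¹ ≤ (((n : ℝ) ^ 2) ^ 3)⁻¹ := by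
        apply inv_anti₀ (by positivity)
        gcongr
        have : 1 ≤ b ^ 2 := by nlinarith
        nlinarith [sq_nonneg (n : ℝ)]
      simp [qf, majorant, absInvPow, hn, -inv_pow]
      rw [e]; linarith
  · by_cases hn : n = 0
    · subst hn
      have e : (|(m : ℝ)| ^ 6) = ((m : ℝ) ^ 2) ^ 3 := by rw [← sq_abs]; ring
      simp only [qf, majorant, absInvPow, e]
      simp [hm]
      apply le_of_eq; ring
    · have := h.inv_cube_le hb hm hn
      simpa [majorant, hm, hn] using this

end ReducedForm
namespace ReducedForm

variable {a b P : ℝ}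

/-- The virial identity compared with the majorant. The terms `(±1, 0)` and `(0, ±1)` are evaluated
separately, and `c` is any lower bound for the gap at the four terms `(±1, ±1)`. -/
lemma virial_bound (h : ReducedForm a b P) (hb : 1 ≤ b) (hmin : IsMinForm (a ^ 2) P (b ^ 2)) {c : ℝ}
    (hc : (qf (a ^ 2) P (b ^ 2) (1, 1) ^ 3)⁻¹ - (qf (a ^ 2) P (b ^ 2) (1, 1) ^ 6)⁻¹ +
      ((qf (a ^ 2) P (b ^ 2) (1, -1) ^ 3)⁻¹ - (qf (a ^ 2) P (b ^ 2) (1, -1) ^ 6)⁻¹) + c ≤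
      9 / 8 * a⁻¹ ^ 3) :
    4 * (a⁻¹ ^ 3) ^ 4 + 4 * c + 3 ≤
      225 / 32 * a⁻¹ ^ 3 + 33 / 8 * (a⁻¹ ^ 3) ^ 2 + 33 / 8 := by
  have ha := h.pos
  have hA : 0 < a ^ 2 := by positivity
  have hX : 0 ≤ a⁻¹ ^ 3 := by positivity
  set X := a⁻¹ ^ 3 with hXdef
  have s3 := summable_qf_pow hA h.disc (k := 3) (by norm_num)
  have s6 := summable_qf_pow hA h.disc (k := 6) (by norm_num)
  have z := hmin.tsum_eq_zero hA h.disc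
  set f : ℤ × ℤ → ℝ := fun p => (qf (a ^ 2) P (b ^ 2) p ^ 3)⁻¹ - (qf (a ^ 2) P (b ^ 2) p ^ 6)⁻¹
    with hf
  have hfs : Summable f := s3.sub s6
  obtain ⟨sf, tf⟩ := tsum_add_negSnd hfs
  obtain ⟨sm, tm⟩ := tsum_majorant_le hX
  have hS := sm.sub sf
  have hT := sm.tsum_sub sf
  rw [tf, z] at hT
  have hle : ∑ p ∈ {(1, 0), (-1, 0), (0, 1), (0, -1), (1, 1), (1, -1), (-1, 1), (-1, -1)},
      (majorant X p - (f p + f (negSnd p))) ≤ ∑' p, (majorant X p - (f p + f (negSnd p))) :=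
    hS.sum_le_tsum _ (fun p _ => sub_nonneg.2 (h.le_majorant hb p))
  rw [hT] at hle
  have evenf : ∀ m n, f (-m, -n) = f (m, n) := by
    intro m n
    have : qf (a ^ 2) P (b ^ 2) (-m, -n) = qf (a ^ 2) P (b ^ 2) (m, n) := by
      simp only [qf]; push_cast; ring
    simp only [hf, this]
  have f10 : f (1, 0) = X ^ 2 - X ^ 4 := by
    simp only [hf, qf, hXdef]
    norm_num
    ring
  have f01 : f (0, 1) ≤ 1 / 4 := by
    have e : f (0, 1) = ((b ^ 2) ^ 3)⁻¹ - ((b ^ 2) ^ 3)⁻¹ ^ 2 := by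
      simp only [hf, qf]; norm_num; ring
    rw [e]; nlinarith [sq_nonneg (((b ^ 2) ^ 3)⁻¹ - 1 / 2)]
  have fm10 : f (-1, 0) = f (1, 0) := by simpa using evenf 1 0
  have f0m1 : f (0, -1) = f (0, 1) := by simpa using evenf 0 1
  have fm1m1 : f (-1, -1) = f (1, 1) := evenf 1 1
  have fm11 : f (-1, 1) = f (1, -1) := by simpa using evenf 1 (-1)
  have hc' : f (1, 1) + f (1, -1) + c ≤ 9 / 8 * X := hc
  have mX : ∀ i : ℤ, |i| = 1 → majorant X (i, 0) = 2 * X ^ 2 ∧ majorant X (0, i) = 2 ∧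
      ∀ j : ℤ, |j| = 1 → majorant X (i, j) = 9 / 8 * X := by
    intro i hi
    have hi0 : i ≠ 0 := by rintro rfl; simp at hi
    have hi' : |(i : ℝ)| = 1 := by exact_mod_cast hi
    refine ⟨by simp [majorant, absInvPow, hi'], by simp [majorant, absInvPow, hi'], ?_⟩
    intro j hj
    have hj0 : j ≠ 0 := by rintro rfl; simp at hj
    have hj' : |(j : ℝ)| = 1 := by exact_mod_cast hj
    simp [majorant, absInvPow, hi', hj', hi0, hj0]
  obtain ⟨p1, p2, p3⟩ := mX 1 (by norm_num)
  obtain ⟨n1, n2, n3⟩ := mX (-1) (by norm_num)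
  rw [Finset.sum_insert (by decide), Finset.sum_insert (by decide), Finset.sum_insert (by decide),
    Finset.sum_insert (by decide), Finset.sum_insert (by decide), Finset.sum_insert (by decide),
    Finset.sum_insert (by decide), Finset.sum_singleton] at hle
  simp only [negSnd_apply, neg_zero, neg_neg, p1, p2, n1, n2, p3 1 (by norm_num),
    p3 (-1) (by norm_num), n3 1 (by norm_num), n3 (-1) (by norm_num), fm10, f0m1, fm1m1,
    fm11, f10] at hle
  linarith

lemma seventeen_twentieths_lt_length (h : ReducedForm a b P) (hb : 1 ≤ b)
    (hmin : IsMinForm (a ^ 2) P (b ^ 2)) : 17 / 20 < a := by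
  have ha := h.pos
  have key := h.virial_bound hb hmin (c := 0) (by
    have h1 := h.inv_cube_le hb (m := 1) (n := 1) (by norm_num) (by norm_num)
    have h2 : 0 ≤ (qf (a ^ 2) P (b ^ 2) (1, 1) ^ 6)⁻¹ := by positivity
    have h3 : 0 ≤ (qf (a ^ 2) P (b ^ 2) (1, -1) ^ 6)⁻¹ := by positivity
    simp [absInvPow, -inv_pow] at h1
    linarith)
  by_contra! hle
  have hX : (8 / 5 : ℝ) ≤ a⁻¹ ^ 3 := by
    calc (8 / 5 : ℝ) ≤ (17 / 20 : ℝ)⁻¹ ^ 3 := by norm_num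
      _ ≤ _ := by gcongr
  set X := a⁻¹ ^ 3
  have : (64 / 25 : ℝ) ≤ X ^ 2 := by nlinarith
  nlinarith [mul_nonneg (sub_nonneg.2 hX) (sub_nonneg.2 this)]

lemma ten_elevenths_lt_length (h : ReducedForm a b P) (hb : 1 ≤ b)
    (hC : a ^ 2 + b ^ 2 - 2 * P ≤ 1)
    (hmin : IsMinForm (a ^ 2) P (b ^ 2)) : 10 / 11 < a := by
  have ha := h.pos
  have hA : 0 < a ^ 2 := by positivity
  have key := h.virial_bound hb hmin (c := a⁻¹ ^ 3) (by
    have q1 : qf (a ^ 2) P (b ^ 2) (1, -1) = a ^ 2 + b ^ 2 - 2 * P := by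
      simp only [qf]; push_cast; ring
    have q0 : 0 < qf (a ^ 2) P (b ^ 2) (1, -1) := qf_pos hA h.disc (by decide)
    have h1 : (qf (a ^ 2) P (b ^ 2) (1, -1) ^ 3)⁻¹ ≤ (qf (a ^ 2) P (b ^ 2) (1, -1) ^ 6)⁻¹ := by
      apply inv_anti₀ (by positivity)
      exact pow_le_pow_of_le_one q0.le (by linarith) (by norm_num)
    have q2 : 2 * a ≤ qf (a ^ 2) P (b ^ 2) (1, 1) := by
      simp only [qf]; push_cast
      nlinarith [h.nonneg, h.le, sq_nonneg (a - b)]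
    have h2 : (qf (a ^ 2) P (b ^ 2) (1, 1) ^ 3)⁻¹ ≤ 1 / 8 * a⁻¹ ^ 3 := by
      calc _ ≤ ((2 * a) ^ 3)⁻¹ := inv_anti₀ (by positivity) (by gcongr)
        _ = _ := by field_simp; norm_num
    have h3 : 0 ≤ (qf (a ^ 2) P (b ^ 2) (1, 1) ^ 6)⁻¹ := by positivity
    linarith)
  by_contra! hle
  have hX : (1331 / 1000 : ℝ) ≤ a⁻¹ ^ 3 := by
    calc (1331 / 1000 : ℝ) ≤ (10 / 11 : ℝ)⁻¹ ^ 3 := by norm_num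
      _ ≤ _ := by gcongr
  set X := a⁻¹ ^ 3
  have : (177 / 100 : ℝ) ≤ X ^ 2 := by nlinarith
  nlinarith [mul_nonneg (sub_nonneg.2 hX) (sub_nonneg.2 this)]

/-- If all nonzero vectors have length at least `1`, the virial identity fails, since its terms are
nonnegative and the one at `2u` is positive. -/
lemma length_lt_one (h : ReducedForm a b P) (hmin : IsMinForm (a ^ 2) P (b ^ 2)) : a < 1 := by
  by_contra! ha1
  have ha := h.pos
  have hA : 0 < a ^ 2 := by positivity
  have s3 := summable_qf_pow hA h.disc (k := 3) (by norm_num)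
  have s6 := summable_qf_pow hA h.disc (k := 6) (by norm_num)
  have z := hmin.tsum_eq_zero hA h.disc
  have hq : ∀ p : ℤ × ℤ, p ≠ 0 → 1 ≤ qf (a ^ 2) P (b ^ 2) p := by
    rintro ⟨m, n⟩ hp
    have hm := sq_abs (m : ℝ)
    have hn := sq_abs (n : ℝ)
    have hmn : -(|(m : ℝ)| * |(n : ℝ)|) ≤ m * n := by
      rw [← abs_mul]; exact neg_abs_le _
    have hb1 : 1 ≤ b := ha1.trans h.le
    have hlow : (|(m : ℝ)| * a) ^ 2 + (|(n : ℝ)| * b) ^ 2 - (|(m : ℝ)| * a) * (|(n : ℝ)| * b) ≤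
        qf (a ^ 2) P (b ^ 2) (m, n) := by
      simp only [qf, mul_pow, hm, hn]
      have : 0 ≤ |(m : ℝ)| * |(n : ℝ)| * (a * b - 2 * P) :=
        mul_nonneg (by positivity) (by linarith [h.le_half])
      nlinarith [mul_le_mul_of_nonneg_right hmn h.nonneg]
    refine le_trans ?_ hlow
    have one_le : ∀ k : ℤ, k ≠ 0 → (1 : ℝ) ≤ |(k : ℝ)| := by
      intro k hk; exact_mod_cast Int.one_le_abs hk
    by_cases h1 : m = 0
    · have h2 : n ≠ 0 := by rintro rfl; exact hp (by simp [h1])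
      have : 1 ≤ |(n : ℝ)| * b := one_le_mul_of_one_le_of_one_le (one_le n h2) hb1
      simp only [h1, Int.cast_zero, abs_zero, zero_mul]; nlinarith
    · have i1 : 1 ≤ |(m : ℝ)| * a := one_le_mul_of_one_le_of_one_le (one_le m h1) ha1
      by_cases h2 : n = 0
      · simp only [h2, Int.cast_zero, abs_zero, zero_mul]; nlinarith
      · have i2 : 1 ≤ |(n : ℝ)| * b := one_le_mul_of_one_le_of_one_le (one_le n h2) hb1
        nlinarith [sq_nonneg (|(m : ℝ)| * a - |(n : ℝ)| * b)]
  have hpos : 0 < ∑' p : ℤ × ℤ,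
      ((qf (a ^ 2) P (b ^ 2) p ^ 3)⁻¹ - (qf (a ^ 2) P (b ^ 2) p ^ 6)⁻¹) := by
    refine (s3.sub s6).tsum_pos (fun p => ?_) (2, 0) ?_
    · by_cases hp : p = 0
      · rw [hp, qf_zero]; norm_num
      · rw [sub_nonneg]
        have := hq p hp
        exact inv_anti₀ (by positivity) (pow_le_pow_right₀ this (by norm_num))
    · rw [sub_pos]
      have : 1 < qf (a ^ 2) P (b ^ 2) (2, 0) := by
        simp only [qf]; push_cast; nlinarith
      exact inv_strictAnti₀ (by positivity) (pow_lt_pow_right₀ this (by norm_num))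
  linarith

end ReducedForm

/-! ### Shrinking the lattice orthogonally to the short vector -/

lemma potSq_lt {x y : ℝ} (hx : 1 ≤ x) (hxy : x < y) : potSq x < potSq y := by
  have h1 : (x ^ 3)⁻¹ ≤ 1 := inv_le_one_of_one_le₀ (one_le_pow₀ hx)
  have h2 : (y ^ 3)⁻¹ < (x ^ 3)⁻¹ :=
    inv_strictAnti₀ (by positivity) (pow_lt_pow_left₀ hxy (by linarith) (by norm_num))
  rw [potSq_eq, potSq_eq]
  nlinarith

/-- A minimizer cannot be compressed orthogonally to `u` while all vectors outside `ℤu` keep length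
at least `1`. -/
lemma IsMinForm.not_compressible {A P B η : ℝ} (h : IsMinForm A P B) (hA : 0 < A) (hη : 0 < η)
    (hd : P ^ 2 < A * (B - η))
    (hq : ∀ m n : ℤ, n ≠ 0 → 1 ≤ qf A P (B - η) (m, n)) : False := by
  have hd' : P ^ 2 < A * B := by nlinarith
  have hlt : formEnergy A P (B - η) < formEnergy A P B := by
    refine Summable.tsum_lt_tsum (i := (0, 1)) ?_ ?_ (summable_potSq hA hd) (summable_potSq hA hd')
    · rintro ⟨m, n⟩
      by_cases hn : n = 0
      · simp [hn, qf]
      · refine (potSq_lt (hq m n hn) ?_).le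
        have : (0 : ℝ) < (n : ℝ) ^ 2 := by positivity
        simp only [qf]; nlinarith
    · refine potSq_lt (hq 0 1 (by norm_num)) ?_
      simp only [qf]; push_cast; linarith
  exact absurd (h A P (B - η) hA hd) (not_le.2 hlt)

namespace ReducedForm

variable {a b P : ℝ}

/-- For a minimizer with `‖v‖ > 1` the vector `v - u` is short: otherwise every vector outside `ℤu`
is longer than `1` and the lattice can be compressed orthogonally to `u`. -/
lemma diff_le_one (h : ReducedForm a b P) (hb : 1 < b) (hmin : IsMinForm (a ^ 2) P (b ^ 2)) :
    a ^ 2 + b ^ 2 - 2 * P ≤ 1 := by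
  have ha := h.pos
  have hA : 0 < a ^ 2 := by positivity
  have ha' := h.seventeen_twentieths_lt_length hb.le hmin
  have hP := h.le_half
  have hP0 := h.nonneg
  have hPsq : P ^ 2 ≤ a ^ 2 * b ^ 2 / 4 := by nlinarith
  by_contra! hC
  have one_le_sq : ∀ n : ℤ, n ≠ 0 → (1 : ℝ) ≤ (n : ℝ) ^ 2 := by
    intro n hn
    have : 0 < n ^ 2 := by positivity
    exact_mod_cast this
  -- the squared height of `v` over `ℝu` is at least `3‖v‖² / 4`, and compression by `η` lowers it
  -- by exactly `η`
  have height : ∀ (η : ℝ) (m n : ℤ),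
      (n : ℝ) ^ 2 * (3 / 4 * b ^ 2 - η) ≤ qf (a ^ 2) P (b ^ 2 - η) (m, n) := by
    intro η m n
    have e : a ^ 2 * (qf (a ^ 2) P (b ^ 2 - η) (m, n) - (n : ℝ) ^ 2 * (3 / 4 * b ^ 2 - η)) =
        (m * a ^ 2 + n * P) ^ 2 + (n : ℝ) ^ 2 * (a ^ 2 * b ^ 2 / 4 - P ^ 2) := by
      simp only [qf]; ring
    have : 0 ≤ a ^ 2 * (qf (a ^ 2) P (b ^ 2 - η) (m, n) - (n : ℝ) ^ 2 * (3 / 4 * b ^ 2 - η)) := by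
      rw [e]
      have := mul_nonneg (sq_nonneg (n : ℝ)) (sub_nonneg.2 hPsq)
      positivity
    linarith [nonneg_of_mul_nonneg_right this hA]
  by_cases hB : 4 / 3 < b ^ 2
  · refine hmin.not_compressible hA (η := 3 / 4 * b ^ 2 - 1) (by linarith) (by nlinarith) ?_
    intro m n hn
    have := height (3 / 4 * b ^ 2 - 1) m n
    have := one_le_sq n hn
    linarith
  · push Not at hB
    set η := min (b ^ 2) (a ^ 2 + b ^ 2 - 2 * P) - 1 with hη
    have hη1 : η ≤ b ^ 2 - 1 := by rw [hη]; linarith [min_le_left (b ^ 2) (a ^ 2 + b ^ 2 - 2 * P)]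
    have hη2 : η ≤ a ^ 2 + b ^ 2 - 2 * P - 1 := by
      rw [hη]; linarith [min_le_right (b ^ 2) (a ^ 2 + b ^ 2 - 2 * P)]
    have hη0 : 0 < η := by
      have : 1 < min (b ^ 2) (a ^ 2 + b ^ 2 - 2 * P) := lt_min (by nlinarith) hC
      rw [hη]; linarith
    refine hmin.not_compressible hA hη0 (by nlinarith) ?_
    intro m n hn
    by_cases hn1 : |n| = 1
    · -- here `n = ±1`; put `k = ±m`, the sign being that of `n`
      have hb3 : 2 * P ≤ 3 * a ^ 2 := by nlinarith
      have main : ∀ k : ℤ, 1 ≤ (k : ℝ) ^ 2 * a ^ 2 + 2 * k * P + (b ^ 2 - η) := by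
        intro k
        rcases le_or_gt 0 k with hk | hk
        · have : (0 : ℝ) ≤ k := by exact_mod_cast hk
          have : 0 ≤ (k : ℝ) * P := by positivity
          nlinarith [mul_nonneg (sq_nonneg (k : ℝ)) hA.le]
        · obtain ⟨j, rfl⟩ : ∃ j : ℕ, k = -(j + 1) := ⟨(-k - 1).toNat, by omega⟩
          push_cast
          have hj : (0 : ℝ) ≤ j := by positivity
          have hjj : 0 ≤ (j : ℝ) * (j - 1) := by
            rcases Nat.eq_zero_or_pos j with rfl | hj'
            · simp
            · have : (1 : ℝ) ≤ j := by exact_mod_cast hj'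
              exact mul_nonneg hj (by linarith)
          nlinarith [mul_nonneg hj (sub_nonneg.2 hb3), mul_nonneg hjj hA.le]
      rcases (abs_eq (by norm_num)).1 hn1 with rfl | rfl
      · have := main m
        simp only [qf]; push_cast; linarith
      · have := main (-m)
        push_cast at this
        simp only [qf]; push_cast; linarith
    · have h2 : 2 ≤ |n| := by have := Int.one_le_abs hn; omega
      have h4 : (4 : ℝ) ≤ (n : ℝ) ^ 2 := by
        have : (2 : ℝ) ≤ |(n : ℝ)| := by exact_mod_cast h2
        rw [← sq_abs]; nlinarith
      have := height η m n
      nlinarith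

end ReducedForm
/-! ### Shortening the long diagonal -/

/-- The derivative of `potSq`. -/
def dpotSq (s : ℝ) : ℝ := 6 * (s⁻¹ ^ 4 - s⁻¹ ^ 7)

lemma hasDerivAt_potSq {s : ℝ} (hs : s ≠ 0) : HasDerivAt potSq (dpotSq s) s := by
  have h6 := (hasDerivAt_pow 6 s).inv (pow_ne_zero 6 hs)
  have h3 := ((hasDerivAt_pow 3 s).inv (pow_ne_zero 3 hs)).const_mul 2
  have e : potSq = fun s => (s ^ 6)⁻¹ - 2 * (s ^ 3)⁻¹ := rfl
  rw [e]
  refine (h6.fun_sub h3).congr_deriv ?_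
  simp only [dpotSq]
  field_simp
  norm_num
  ring

lemma dpotSq_anti {x y : ℝ} (hx : 5 / 4 ≤ x) (hxy : x ≤ y) : dpotSq y ≤ dpotSq x := by
  have hy0 : 0 < y⁻¹ := inv_pos.2 (by linarith)
  have h1 : y⁻¹ ≤ x⁻¹ := inv_anti₀ (by linarith) hxy
  have h2 : x⁻¹ ≤ 4 / 5 := by
    calc x⁻¹ ≤ (5 / 4 : ℝ)⁻¹ := inv_anti₀ (by norm_num) hx
      _ = _ := by norm_num
  have hmono : MonotoneOn (fun t : ℝ => t ^ 4 - t ^ 7) (Set.Icc 0 (4 / 5)) := by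
    refine monotoneOn_of_deriv_nonneg (convex_Icc _ _) (by fun_prop) (by fun_prop) ?_
    intro t ht
    rw [interior_Icc] at ht
    have hd : HasDerivAt (fun t : ℝ => t ^ 4 - t ^ 7) (4 * t ^ 3 - 7 * t ^ 6) t := by
      simpa using (hasDerivAt_pow 4 t).fun_sub (hasDerivAt_pow 7 t)
    rw [hd.deriv]
    have h3 : t ^ 3 ≤ (4 / 5) ^ 3 := pow_le_pow_left₀ ht.1.le ht.2.le 3
    have h4 : 0 < t ^ 3 := pow_pos ht.1 3
    nlinarith
  have := hmono ⟨hy0.le, h1.trans h2⟩ ⟨hy0.le.trans h1, h2⟩ h1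
  simp only [dpotSq]
  linarith

/-- Tangent line bounds expressing the concavity of the potential on `[5/4, ∞)`. -/
lemma potSq_sub_bounds {x y : ℝ} (hx : 5 / 4 ≤ x) (hxy : x ≤ y) :
    dpotSq y * (y - x) ≤ potSq y - potSq x ∧ potSq y - potSq x ≤ dpotSq x * (y - x) := by
  rcases hxy.eq_or_lt with rfl | hlt
  · simp
  obtain ⟨c, hc, he⟩ := exists_hasDerivAt_eq_slope potSq dpotSq hlt
    (fun s hs => (hasDerivAt_potSq (by linarith [hs.1])).continuousAt.continuousWithinAt)
    (fun s hs => hasDerivAt_potSq (by linarith [hs.1]))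
  have hp : 0 < y - x := by linarith
  have he' : potSq y - potSq x = dpotSq c * (y - x) := by rw [he]; field_simp
  have h1 : dpotSq y ≤ dpotSq c := dpotSq_anti (by linarith [hc.1]) hc.2.le
  have h2 : dpotSq c ≤ dpotSq x := dpotSq_anti hx hc.1.le
  rw [he']
  constructor <;> gcongr

/-- Moving two arguments towards each other raises the value of a concave function. -/
lemma potSq_pair {x y e : ℝ} (hx : 5 / 4 ≤ x) (he : 0 ≤ e) (hxy : x + e ≤ y - e) :
    potSq x + potSq y ≤ potSq (x + e) + potSq (y - e) := by
  have h1 := (potSq_sub_bounds hx (show x ≤ x + e by linarith)).1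
  have h2 := (potSq_sub_bounds (show 5 / 4 ≤ y - e by linarith) (show y - e ≤ y by linarith)).2
  have h3 := dpotSq_anti (show 5 / 4 ≤ x + e by linarith) hxy
  have h4 := mul_le_mul_of_nonneg_right h3 he
  have e1 : x + e - x = e := by ring
  have e2 : y - (y - e) = e := by ring
  rw [e1] at h1
  rw [e2] at h2
  linarith

/-- The gain at `(m, n)` and `(m, -n)` in lowering `‖u + w‖²` from `B` to `1`. -/
def gain (A C B : ℝ) (p : ℤ × ℤ) : ℝ :=
  (potSq (qf A ((B - A - C) / 2) C p) - potSq (qf A ((1 - A - C) / 2) C p)) +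
    (potSq (qf A ((B - A - C) / 2) C (negSnd p)) - potSq (qf A ((1 - A - C) / 2) C (negSnd p)))

section

variable {A C B : ℝ}

lemma gain_neg_snd (m n : ℤ) : gain A C B (m, -n) = gain A C B (m, n) := by
  simp only [gain, negSnd_apply, neg_neg]; ring

lemma gain_neg_fst (m n : ℤ) : gain A C B (-m, n) = gain A C B (m, n) := by
  rw [← gain_neg_snd]
  simp [gain, negSnd_apply, qf]

/-- For `mn ≥ 2` the gain is nonnegative by concavity: for `mn > 0` the vector `mu + nw` is
shorter than `mu - nw`, and lowering `B` moves the two squared lengths apart. -/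
lemma gain_nonneg_of_pos (hA : 0.826 < A) (hA1 : A < 1) (hC : 0.917 ≤ C) (hC1 : C ≤ 1)
    (hB : 1 < B) (hB2 : B ≤ 1.158) {m n : ℤ} (hmn : 2 ≤ m * n) : 0 ≤ gain A C B (m, n) := by
  have hint : 3 ≤ m ^ 2 + n ^ 2 - m * n := by
    by_contra! hlt
    have h2 : m * n = 2 := by nlinarith [sq_nonneg (m - n)]
    have h3 : (m - n) ^ 2 = 0 := by nlinarith [sq_nonneg (m - n)]
    have h4 : m = n := by
      have := pow_eq_zero_iff (two_ne_zero) |>.1 h3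
      linarith
    subst h4
    have : m < 2 := by nlinarith
    have : -2 < m := by nlinarith
    interval_cases m <;> omega
  have hint' : (3 : ℝ) ≤ (m : ℝ) ^ 2 + (n : ℝ) ^ 2 - m * n := by exact_mod_cast hint
  have hmn' : (2 : ℝ) ≤ m * n := by exact_mod_cast hmn
  set x := qf A ((1 - A - C) / 2) C (m, n) with hx
  set y := qf A ((1 - A - C) / 2) C (m, -n) with hy
  have e1 : qf A ((B - A - C) / 2) C (m, n) = x + m * n * (B - 1) := by
    simp only [hx, qf]; ring
  have e2 : qf A ((B - A - C) / 2) C (m, -n) = y - m * n * (B - 1) := by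
    simp only [hy, qf]; push_cast; ring
  have hx54 : 5 / 4 ≤ x := by
    have : x = (A + C - 1) * ((m : ℝ) ^ 2 + (n : ℝ) ^ 2 - m * n) + (1 - C) * (m : ℝ) ^ 2 +
        (1 - A) * (n : ℝ) ^ 2 := by
      simp only [hx, qf]; ring
    rw [this]
    have h1 : 0 ≤ (1 - C) * (m : ℝ) ^ 2 := mul_nonneg (by linarith) (sq_nonneg _)
    have h2 : 0 ≤ (1 - A) * (n : ℝ) ^ 2 := mul_nonneg (by linarith) (sq_nonneg _)
    nlinarith
  have hxy : x + m * n * (B - 1) ≤ y - m * n * (B - 1) := by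
    have : y - m * n * (B - 1) - (x + m * n * (B - 1)) = 2 * (m * n) * (A + C - B) := by
      simp only [hx, hy, qf]; push_cast; ring
    have : 0 ≤ 2 * ((m : ℝ) * n) * (A + C - B) := mul_nonneg (by linarith) (by linarith)
    linarith
  have := potSq_pair hx54 (e := m * n * (B - 1)) (mul_nonneg (by linarith) (by linarith)) hxy
  rw [gain, negSnd_apply, e1, e2]
  linarith

/-- Near the triangular lattice of side `1` the loss at `u - w` is outweighed by the gains at
`2u + w` and `u + 2w`, all of which have length close to `√3`. The losses at `2u - w` and `u - 2w`,
of length close to `√7`, are small. -/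
lemma dpotSq_balance (hA : 0.826 < A) (hA1 : A < 1) (hC1 : C ≤ 1)
    (hB : 1 < B) (hB2 : B ≤ 1.158) (hBC : B - C ≤ 0.158) (hq : 2.48 ≤ 2 * A + 2 * C - B) :
    dpotSq (2 * A + 2 * C - B) + 2 * dpotSq (6 * A + 3 * C - 2 * B) +
      2 * dpotSq (6 * C + 3 * A - 2 * B) <
      2 * dpotSq (2 * A + 2 * B - C) + 2 * dpotSq (2 * B + 2 * C - A) := by
  have ht : dpotSq 3.5 ≤ dpotSq (2 * B + 2 * C - A) :=
    dpotSq_anti (by linarith) (by linarith)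
  have hr : dpotSq (6 * A + 3 * C - 2 * B) ≤ dpotSq 5.3 :=
    dpotSq_anti (by norm_num) (by linarith)
  have hr2 : dpotSq (6 * C + 3 * A - 2 * B) ≤ dpotSq 5.3 :=
    dpotSq_anti (by norm_num) (by linarith)
  rcases le_total (2 * A + 2 * C - B) 2.65 with h | h
  · have h1 : dpotSq (2 * A + 2 * C - B) ≤ dpotSq 2.48 := dpotSq_anti (by norm_num) hq
    have h2 : dpotSq 3.13 ≤ dpotSq (2 * A + 2 * B - C) :=
      dpotSq_anti (by linarith) (by linarith)
    have : dpotSq 2.48 + 4 * dpotSq 5.3 < 2 * dpotSq 3.13 + 2 * dpotSq 3.5 := by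
      norm_num [dpotSq]
    linarith
  · have h1 : dpotSq (2 * A + 2 * C - B) ≤ dpotSq 2.65 := dpotSq_anti (by norm_num) h
    have h2 : dpotSq 3.5 ≤ dpotSq (2 * A + 2 * B - C) :=
      dpotSq_anti (by linarith) (by linarith)
    have : dpotSq 2.65 + 4 * dpotSq 5.3 < 2 * dpotSq 3.5 + 2 * dpotSq 3.5 := by
      norm_num [dpotSq]
    linarith

/-- If the form with `‖u‖² = A`, `‖w‖² = C`, `‖u + w‖² = B > 1` is near the triangular one, lowering
`B` to `1` with `A` and `C` fixed lowers the energy. -/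
lemma not_isMinForm_of_near (hA : 0.826 < A) (hA1 : A < 1) (hC : 0.917 ≤ C) (hC1 : C ≤ 1)
    (hB : 1 < B) (hB2 : B ≤ 1.158) (hBC : B - C ≤ 0.158) (hq : 2.48 ≤ 2 * A + 2 * C - B)
    (hmin : IsMinForm A ((B - A - C) / 2) C) : False := by
  have hA0 : 0 < A := by linarith
  have hd : ((B - A - C) / 2) ^ 2 < A * C := by nlinarith
  have hd' : ((1 - A - C) / 2) ^ 2 < A * C := by nlinarith
  have s1 := summable_potSq hA0 hd
  have s2 := summable_potSq hA0 hd'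
  obtain ⟨sg, tg⟩ := tsum_add_negSnd (s1.sub s2)
  have hE := hmin A ((1 - A - C) / 2) C hA0 hd'
  rw [s1.tsum_sub s2] at tg
  have htot : ∑' p, gain A C B p ≤ 0 := by
    change ∑' p, ((potSq _ - potSq _) + (potSq _ - potSq _)) ≤ 0
    rw [tg]
    simp only [formEnergy] at hE
    linarith
  have hout : ∀ p ∉ ({(1, 1), (1, -1), (-1, 1), (-1, -1), (2, 1), (2, -1), (-2, 1), (-2, -1),
      (1, 2), (1, -2), (-1, 2), (-1, -2)} : Finset (ℤ × ℤ)), 0 ≤ gain A C B p := by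
    rintro ⟨m, n⟩ hp
    have hne1 : m * n ≠ 1 := by
      intro h
      rcases Int.mul_eq_one_iff_eq_one_or_neg_one.1 h with ⟨rfl, rfl⟩ | ⟨rfl, rfl⟩ <;>
        exact hp (by decide)
    have hne2 : m * n ≠ -1 := by
      intro h
      rcases Int.mul_eq_neg_one_iff_eq_one_or_neg_one.1 h with ⟨rfl, rfl⟩ | ⟨rfl, rfl⟩ <;>
        exact hp (by decide)
    rcases lt_trichotomy (m * n) 0 with h | h | h
    · rw [← gain_neg_snd]
      exact gain_nonneg_of_pos hA hA1 hC hC1 hB hB2 (by rw [mul_neg]; omega)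
    · rcases mul_eq_zero.1 h with rfl | rfl <;> simp [gain, negSnd_apply, qf]
    · exact gain_nonneg_of_pos hA hA1 hC hC1 hB hB2 (by omega)
  have hle := Summable.sum_le_tsum _ hout sg
  rw [Finset.sum_insert (by decide), Finset.sum_insert (by decide), Finset.sum_insert (by decide),
    Finset.sum_insert (by decide), Finset.sum_insert (by decide), Finset.sum_insert (by decide),
    Finset.sum_insert (by decide), Finset.sum_insert (by decide), Finset.sum_insert (by decide),
    Finset.sum_insert (by decide), Finset.sum_insert (by decide), Finset.sum_singleton] at hle
  simp only [gain_neg_fst, gain_neg_snd] at hle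
  have g11 : -(dpotSq (2 * A + 2 * C - B) * (B - 1)) ≤ gain A C B (1, 1) := by
    have e1 : qf A ((B - A - C) / 2) C (1, 1) = B := by simp only [qf]; push_cast; ring
    have e2 : qf A ((1 - A - C) / 2) C (1, 1) = 1 := by simp only [qf]; push_cast; ring
    have e3 : qf A ((B - A - C) / 2) C (1, -1) = 2 * A + 2 * C - B := by
      simp only [qf]; push_cast; ring
    have e4 : qf A ((1 - A - C) / 2) C (1, -1) = 2 * A + 2 * C - 1 := by
      simp only [qf]; push_cast; ring
    have h1 := potSq_lt le_rfl hB
    have h2 := (potSq_sub_bounds (x := 2 * A + 2 * C - B) (y := 2 * A + 2 * C - 1)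
      (by linarith) (by linarith)).2
    rw [gain, negSnd_apply, e1, e2, e3, e4]
    linarith
  have g21 : 2 * (B - 1) * (dpotSq (2 * A + 2 * B - C) - dpotSq (6 * A + 3 * C - 2 * B)) ≤
      gain A C B (2, 1) := by
    have e1 : qf A ((B - A - C) / 2) C (2, 1) = 2 * A + 2 * B - C := by
      simp only [qf]; push_cast; ring
    have e2 : qf A ((1 - A - C) / 2) C (2, 1) = 2 * A + 2 - C := by
      simp only [qf]; push_cast; ring
    have e3 : qf A ((B - A - C) / 2) C (2, -1) = 6 * A + 3 * C - 2 * B := by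
      simp only [qf]; push_cast; ring
    have e4 : qf A ((1 - A - C) / 2) C (2, -1) = 6 * A + 3 * C - 2 := by
      simp only [qf]; push_cast; ring
    have h1 := (potSq_sub_bounds (x := 2 * A + 2 - C) (y := 2 * A + 2 * B - C)
      (by linarith) (by linarith)).1
    have h2 := (potSq_sub_bounds (x := 6 * A + 3 * C - 2 * B) (y := 6 * A + 3 * C - 2)
      (by linarith) (by linarith)).2
    rw [gain, negSnd_apply, e1, e2, e3, e4]
    linarith
  have g12 : 2 * (B - 1) * (dpotSq (2 * B + 2 * C - A) - dpotSq (6 * C + 3 * A - 2 * B)) ≤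
      gain A C B (1, 2) := by
    have e1 : qf A ((B - A - C) / 2) C (1, 2) = 2 * B + 2 * C - A := by
      simp only [qf]; push_cast; ring
    have e2 : qf A ((1 - A - C) / 2) C (1, 2) = 2 + 2 * C - A := by
      simp only [qf]; push_cast; ring
    have e3 : qf A ((B - A - C) / 2) C (1, -2) = 6 * C + 3 * A - 2 * B := by
      simp only [qf]; push_cast; ring
    have e4 : qf A ((1 - A - C) / 2) C (1, -2) = 6 * C + 3 * A - 2 := by
      simp only [qf]; push_cast; ring
    have h1 := (potSq_sub_bounds (x := 2 + 2 * C - A) (y := 2 * B + 2 * C - A)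
      (by linarith) (by linarith)).1
    have h2 := (potSq_sub_bounds (x := 6 * C + 3 * A - 2 * B) (y := 6 * C + 3 * A - 2)
      (by linarith) (by linarith)).2
    rw [gain, negSnd_apply, e1, e2, e3, e4]
    linarith
  have hbal := dpotSq_balance hA hA1 hC1 hB hB2 hBC hq
  have := mul_pos (sub_pos.2 hB) (sub_pos.2 hbal)
  linarith

end

/-- The energy in the basis `(u, v - u)`. -/
lemma formEnergy_sub (A P B : ℝ) : formEnergy A (P - A) (A + B - 2 * P) = formEnergy A P B := by
  let e : ℤ × ℤ ≃ ℤ × ℤ :=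
    { toFun := fun p => (p.1 + p.2, p.2)
      invFun := fun p => (p.1 - p.2, p.2)
      left_inv := fun p => by simp
      right_inv := fun p => by simp }
  rw [formEnergy, formEnergy, ← e.tsum_eq]
  refine tsum_congr fun p => ?_
  congr 1
  simp only [e, qf, Equiv.coe_fn_mk]
  push_cast
  ring

lemma ReducedForm.le_one {a b P : ℝ} (h : ReducedForm a b P) (hmin : IsMinForm (a ^ 2) P (b ^ 2)) :
    b ≤ 1 := by
  by_contra! hb
  have ha := h.pos
  have ha1 := h.length_lt_one hmin
  have hC1 := h.diff_le_one hb hmin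
  have hP := h.le_half
  have ha2 := h.ten_elevenths_lt_length hb.le hC1 hmin
  have h1 : b * (b - a) ≤ 1 - a ^ 2 := by nlinarith
  have h2 : b - a ≤ 1 - a ^ 2 := by nlinarith
  have h3 : a * (b - a) ≤ 0.158 := by
    have : a * (b - a) ≤ a * (1 - a ^ 2) := by gcongr
    have : a * (1 - a ^ 2) ≤ 0.158 := by nlinarith [sq_nonneg (a - 10 / 11)]
    linarith
  have h4 : (a - 10 / 11) * (a - 10 / 11) ≥ 0 := mul_self_nonneg _
  refine not_isMinForm_of_near (A := a ^ 2) (C := a ^ 2 + b ^ 2 - 2 * P) (B := b ^ 2)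
    (by nlinarith) (by nlinarith) (by nlinarith) hC1 (by nlinarith) (by nlinarith) (by nlinarith)
    (by nlinarith [sq_nonneg (b - a)]) ?_
  have e : (b ^ 2 - a ^ 2 - (a ^ 2 + b ^ 2 - 2 * P)) / 2 = P - a ^ 2 := by ring
  rw [e]
  intro A' P' B' hA' hd'
  rw [formEnergy_sub]
  exact hmin A' P' B' hA' hd'

/-- If `L₀ = ℤu ⊕ ℤv` is a global minimizer of the Lennard-Jones energy among Bravais
lattices, with reduced basis (`‖u‖ ≤ ‖v‖` and angle in `[π/3, π/2]`), then `‖u‖ < 1`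
and `‖v‖ ≤ 1`. -/
theorem global_minimizer_basis_bounds (L₀ : Set R2) (u v : R2)
    (hbasis : LatticeBasis L₀ u v) (hle : ‖u‖ ≤ ‖v‖)
    (hangle₁ : π / 3 ≤ InnerProductGeometry.angle u v)
    (hangle₂ : InnerProductGeometry.angle u v ≤ π / 2)
    (hmin : ∀ L : Set R2, IsBravais L → ELJ L₀ ≤ ELJ L) :
    ‖u‖ < 1 ∧ ‖v‖ ≤ 1 := by
  have hli := hbasis.1
  have hu : 0 < ‖u‖ := norm_pos_iff.2 (by simpa using hli.ne_zero 0)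
  have hcos : Real.cos (InnerProductGeometry.angle u v) * (‖u‖ * ‖v‖) = inner ℝ u v :=
    InnerProductGeometry.cos_angle_mul_norm_mul_norm u v
  have hc0 : 0 ≤ Real.cos (InnerProductGeometry.angle u v) :=
    Real.cos_nonneg_of_neg_pi_div_two_le_of_le (by linarith [Real.pi_pos]) hangle₂
  have hc1 : Real.cos (InnerProductGeometry.angle u v) ≤ 1 / 2 := by
    rw [← Real.cos_pi_div_three]
    exact Real.cos_le_cos_of_nonneg_of_le_pi (by positivity) (by linarith [Real.pi_pos]) hangle₁
  have huv : 0 ≤ ‖u‖ * ‖v‖ := by positivity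
  have hred : ReducedForm ‖u‖ ‖v‖ (inner ℝ u v) :=
    ⟨hu, hle, by rw [← hcos]; positivity, by rw [← hcos]; nlinarith⟩
  have hform : IsMinForm (‖u‖ ^ 2) (inner ℝ u v) (‖v‖ ^ 2) := by
    intro A P B hA hd
    obtain ⟨L, hL, hE⟩ := exists_bravais hA hd
    rw [← ELJ_eq_formEnergy hbasis, ← hE]
    exact hmin L hL
  exact ⟨hred.length_lt_one hform, hred.le_one hform⟩
end
end

section
/- If L₀ is a global minimizer of the Lennard-Jones energy E_LJ among all Bravais lattices of ℝ², then its area satisfies 0.47468 < |L₀| < 1. -/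
/-!
By Gauss reduction a Bravais lattice of area `A` has a basis whose quadratic form is
`quad a h c (m, n) = (a (m + c n))² + (h n)²` with `a h = A`, `0 ≤ c ≤ 1/2` and `a` the length of a
shortest vector (`exists_reduced`). Its energy is then `zeta12 - 2 * zeta6`, where `zeta6` and
`zeta12` are the Epstein sums of exponents `6` and `12` (`ELJ_eq`). A minimizer cannot gain by
dilation, which forces `zeta12 = zeta6` (`zeta_eq_of_min`); the minimal energy is then `-zeta6`.

*Lower bound* (`area_gt`). In a reduced basis `zeta6 ≤ 8.5 a⁻⁶`, while the two shortest vectors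
alone give `zeta12 ≥ 2 a⁻¹²`. Hence `a⁶ ≥ 1 / 4.25`, and `A ≥ (√3/2) a²` is well above `0.47468`.

*Upper bound* (`area_lt`). Comparison with the triangular lattice of minimal length `1` gives
`zeta6 ≥ 6.62` (`triangular_energy`), and `zeta12 = zeta6` gives `a ≤ 1` (`a_le_one`). Suppose
`A ≥ 1`. Since the two sums agree, `zeta6` is also the sum of `(3/2) r⁻⁶ - (1/2) r⁻¹²` over the
lattice, a weight which stays bounded on the shortest vectors however small `a` is. Summing it row
by row along the shortest vector, the `n`-th row is at height `n h ≥ n`, and a point of it at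
horizontal distance `a d` is at squared distance at least `2 A n d ≥ 2 n d`. The row through the
origin contributes at most `2.3351`, the two adjacent rows at most `1.94943` each, the remaining
ones about `0.302` together: a total below `6.54`, which contradicts `zeta6 ≥ 6.62`.
-/

noncomputable section
open Real

/-! ### Gauss reduction -/

/-- The vector of the lattice spanned by `u`, `v` with integer coordinates `p`. -/
def latVec (u v : R2) (p : ℤ × ℤ) : R2 := (p.1 : ℝ) • u + (p.2 : ℝ) • v

/-- The squared area of the parallelogram spanned by `u` and `v`. -/
def gram (u v : R2) : ℝ := ‖u‖ ^ 2 * ‖v‖ ^ 2 - inner ℝ u v ^ 2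

/-- The squared length of `p.1 • (a, 0) + p.2 • (a * c, h)`: the quadratic form of the lattice
whose shorter basis vector has length `a`, the other having height `h` above it and
horizontal offset `a * c`. -/
def quad (a h c : ℝ) (p : ℤ × ℤ) : ℝ := (a * (p.1 + c * p.2)) ^ 2 + (h * p.2) ^ 2

/-- The parameters `(a, h, c)` are those of a Gauss-reduced basis: the offset is at most half of
the first vector, and the second vector is at least as long as the first one. -/
structure Reduced (a h c : ℝ) : Prop where
  a_pos : 0 < a
  h_pos : 0 < h
  c_nonneg : 0 ≤ c
  c_le : c ≤ 1 / 2
  le : a ^ 2 ≤ a ^ 2 * c ^ 2 + h ^ 2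

/-- `L` has a basis in which the squared norm is the quadratic form `quad a h c`. -/
def HasForm (L : Set R2) (a h c : ℝ) : Prop :=
  ∃ u v : R2, L = Set.range (latVec u v) ∧ ∀ p, ‖latVec u v p‖ ^ 2 = quad a h c p

lemma norm_latVec_sq (u v : R2) (p : ℤ × ℤ) :
    ‖latVec u v p‖ ^ 2 = p.1 ^ 2 * ‖u‖ ^ 2 + 2 * p.1 * p.2 * inner ℝ u v + p.2 ^ 2 * ‖v‖ ^ 2 := by
  unfold latVec
  rw [norm_add_sq_real, norm_smul, norm_smul, inner_smul_left, inner_smul_right, mul_pow, mul_pow,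
    Real.norm_eq_abs, Real.norm_eq_abs, sq_abs, sq_abs]
  simp only [conj_trivial]
  ring

lemma range_latVec (u v : R2) :
    Set.range (latVec u v) = {x : R2 | ∃ m n : ℤ, x = (m : ℝ) • u + (n : ℝ) • v} := by
  ext x
  simp only [Set.mem_range, Prod.exists, Set.mem_ofPred_eq, latVec]
  exact ⟨fun ⟨m, n, h⟩ => ⟨m, n, h.symm⟩, fun ⟨m, n, h⟩ => ⟨m, n, h.symm⟩⟩

/-- A shear of the basis by an integer, followed by a swap, spans the same lattice. -/
lemma range_latVec_shear (u v : R2) (k : ℤ) :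
    Set.range (latVec (v - (k : ℝ) • u) u) = Set.range (latVec u v) := by
  ext x
  simp only [Set.mem_range, Prod.exists, latVec]
  constructor
  · rintro ⟨m, n, rfl⟩
    refine ⟨n - k * m, m, ?_⟩
    push_cast
    module
  · rintro ⟨m, n, rfl⟩
    refine ⟨n, m + k * n, ?_⟩
    push_cast
    module

lemma range_latVec_swap (u v : R2) :
    Set.range (latVec v u) = Set.range (latVec u v) := by
  simpa using range_latVec_shear u v 0

lemma range_latVec_neg (u v : R2) :
    Set.range (latVec u (-v)) = Set.range (latVec u v) := by
  ext x
  simp only [Set.mem_range, Prod.exists, latVec]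
  constructor
  · rintro ⟨m, n, rfl⟩
    exact ⟨m, -n, by push_cast; module⟩
  · rintro ⟨m, n, rfl⟩
    exact ⟨m, -n, by push_cast; module⟩

lemma gram_shear (u v : R2) (t : ℝ) : gram (v - t • u) u = gram u v := by
  unfold gram
  rw [norm_sub_sq_real, inner_sub_left, norm_smul, inner_smul_left, inner_smul_right,
    real_inner_self_eq_norm_sq, real_inner_comm v u, mul_pow, Real.norm_eq_abs, sq_abs]
  simp only [conj_trivial]
  ring

lemma gram_swap (u v : R2) : gram v u = gram u v := by
  simpa using gram_shear u v 0

lemma gram_neg (u v : R2) : gram u (-v) = gram u v := by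
  simp [gram]

lemma gram_pos {u v : R2} (h : LinearIndependent ℝ ![u, v]) : 0 < gram u v := by
  rw [LinearIndependent.pair_iff] at h
  have hu : u ≠ 0 := by
    rintro rfl
    simpa using h 1 0 (by simp)
  have hu' : 0 < ‖u‖ ^ 2 := by positivity
  -- The component of `v` orthogonal to `u`, scaled by `‖u‖ ^ 2`, does not vanish.
  have hw : (‖u‖ ^ 2) • v - (inner ℝ u v : ℝ) • u ≠ 0 := by
    intro h0
    have := (h (-(inner ℝ u v : ℝ)) (‖u‖ ^ 2) (by rw [← h0]; module)).2
    exact hu'.ne' this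
  have hn : ‖(‖u‖ ^ 2) • v - (inner ℝ u v : ℝ) • u‖ ^ 2 = ‖u‖ ^ 2 * gram u v := by
    rw [norm_sub_sq_real, norm_smul, norm_smul, inner_smul_left, inner_smul_right,
      real_inner_comm u v, mul_pow, mul_pow, Real.norm_eq_abs, Real.norm_eq_abs, sq_abs, sq_abs]
    simp only [conj_trivial, gram]
    ring
  have : 0 < ‖u‖ ^ 2 * gram u v := by rw [← hn]; positivity
  exact pos_of_mul_pos_right this hu'.le

lemma gram_eq_sq (u v : R2) :
    gram u v = (‖u‖ * ‖v‖ * |Real.sin (InnerProductGeometry.angle u v)|) ^ 2 := by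
  rw [mul_pow, sq_abs, gram, ← InnerProductGeometry.cos_angle_mul_norm_mul_norm, Real.sin_sq]
  ring

/-- The coordinates of a lattice vector of bounded length are bounded. -/
lemma sq_coord_le (u v : R2) (p : ℤ × ℤ) :
    (p.1 : ℝ) ^ 2 * gram u v ≤ ‖latVec u v p‖ ^ 2 * ‖v‖ ^ 2 ∧
      (p.2 : ℝ) ^ 2 * gram u v ≤ ‖latVec u v p‖ ^ 2 * ‖u‖ ^ 2 := by
  rw [norm_latVec_sq, gram]
  constructor
  · nlinarith [sq_nonneg ((p.1 : ℝ) * inner ℝ u v + p.2 * ‖v‖ ^ 2)]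
  · nlinarith [sq_nonneg ((p.2 : ℝ) * inner ℝ u v + p.1 * ‖u‖ ^ 2)]

lemma finite_latVec_le {u v : R2} (hg : 0 < gram u v) (R : ℝ) :
    {p : ℤ × ℤ | ‖latVec u v p‖ ^ 2 ≤ R}.Finite := by
  have key : ∀ B : ℝ, ∃ N : ℤ, ∀ m : ℤ, (m : ℝ) ^ 2 ≤ B → m ∈ Set.Icc (-N) N := by
    intro B
    refine ⟨⌈B⌉, fun m hm => ?_⟩
    have h1 : (m : ℝ) ^ 2 ≤ ⌈B⌉ := hm.trans (Int.le_ceil B)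
    have h2 : m ^ 2 ≤ ⌈B⌉ := by exact_mod_cast h1
    have h3 : |m| ≤ ⌈B⌉ := (by nlinarith [sq_abs m, abs_nonneg m, Int.le_self_sq |m|])
    exact Set.mem_Icc.2 (abs_le.1 h3)
  obtain ⟨N, hN⟩ := key (R * ‖v‖ ^ 2 / gram u v)
  obtain ⟨M, hM⟩ := key (R * ‖u‖ ^ 2 / gram u v)
  refine ((Set.finite_Icc (-N) N).prod (Set.finite_Icc (-M) M)).subset fun p hp => ?_
  obtain ⟨h1, h2⟩ := sq_coord_le u v p
  refine ⟨hN _ ?_, hM _ ?_⟩ <;> rw [le_div_iff₀ hg]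
  · exact h1.trans (mul_le_mul_of_nonneg_right hp (sq_nonneg _))
  · exact h2.trans (mul_le_mul_of_nonneg_right hp (sq_nonneg _))

/-- Gauss reduction: a basis vector of minimal length, completed by the shortest possible second
vector at an acute angle, is a reduced basis. -/
lemma exists_reduced {L : Set R2} {A : ℝ} (hA : HasArea L A) :
    ∃ a h c : ℝ, Reduced a h c ∧ a * h = A ∧ HasForm L a h c := by
  obtain ⟨u₀, v₀, ⟨hli, hL⟩, hAr⟩ := hA
  rw [← range_latVec] at hL
  have hg₀ := gram_pos hli
  have hgA := gram_eq_sq u₀ v₀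
  rw [hAr] at hgA
  have hA0 : 0 < A := by
    have : 0 ≤ A := by rw [← hAr]; positivity
    refine this.lt_of_ne' ?_
    rintro rfl
    simp [hgA] at hg₀
  let S : Set (ℤ × ℤ) := {p | ‖latVec u₀ v₀ p‖ ^ 2 ≤ ‖u₀‖ ^ 2 ∧
    ∃ v, L = Set.range (latVec (latVec u₀ v₀ p) v) ∧ gram (latVec u₀ v₀ p) v = A ^ 2}
  have hSf : S.Finite := (finite_latVec_le hg₀ (‖u₀‖ ^ 2)).subset fun p hp => hp.1
  have h10 : latVec u₀ v₀ (1, 0) = u₀ := by simp [latVec]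
  have hSn : S.Nonempty := ⟨(1, 0), by rw [h10], v₀, by rw [h10]; exact hL, by rw [h10]; exact hgA⟩
  obtain ⟨p, ⟨hp1, v, hv1, hv2⟩, hmin⟩ := Set.exists_min_image S (fun p => ‖latVec u₀ v₀ p‖ ^ 2) hSf hSn
  set u := latVec u₀ v₀ p with hu
  have hu0 : 0 < ‖u‖ := by
    refine norm_pos_iff.2 fun h0 => ?_
    rw [h0] at hv2
    simp [gram] at hv2
    exact hA0.ne' (by simpa using hv2.symm)
  have hu2 : 0 < ‖u‖ ^ 2 := by positivity
  -- The second vector is moved to within half a period of the foot of the perpendicular.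
  set k : ℤ := round ((inner ℝ u v : ℝ) / ‖u‖ ^ 2) with hk
  set w := v - (k : ℝ) • u with hw
  have hLw : L = Set.range (latVec w u) := by rw [hv1, hw, range_latVec_shear]
  have hgw : gram w u = A ^ 2 := by rw [hw, gram_shear, hv2]
  have hwu : ‖u‖ ^ 2 ≤ ‖w‖ ^ 2 := by
    by_contra! hlt
    have hwL : w ∈ L := by rw [hLw]; exact ⟨(1, 0), by simp [latVec]⟩
    rw [hL] at hwL
    obtain ⟨p', hp'⟩ := hwL
    have := hmin p' ⟨by rw [hp']; exact (hlt.le.trans hp1), u, by rw [hp']; exact hLw,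
      by rw [hp']; exact hgw⟩
    simp only [hp'] at this
    exact absurd this (not_le.2 hlt)
  have hiw : |(inner ℝ u w : ℝ) / ‖u‖ ^ 2| ≤ 1 / 2 := by
    have : (inner ℝ u w : ℝ) / ‖u‖ ^ 2 = (inner ℝ u v : ℝ) / ‖u‖ ^ 2 - k := by
      rw [hw, inner_sub_right, inner_smul_right, real_inner_self_eq_norm_sq]
      field_simp
    rw [this]
    exact abs_sub_round _
  obtain ⟨z, hz1, hz2, hz3, hz4, hz5⟩ : ∃ z : R2, L = Set.range (latVec u z) ∧ gram u z = A ^ 2 ∧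
      ‖z‖ = ‖w‖ ∧ 0 ≤ (inner ℝ u z : ℝ) / ‖u‖ ^ 2 ∧ (inner ℝ u z : ℝ) / ‖u‖ ^ 2 ≤ 1 / 2 := by
    rcases le_total 0 ((inner ℝ u w : ℝ) / ‖u‖ ^ 2) with h0 | h0
    · exact ⟨w, by rw [hLw, range_latVec_swap], by rw [gram_swap, hgw], rfl, h0,
        (le_abs_self _).trans hiw⟩
    · refine ⟨-w, by rw [range_latVec_neg, hLw, range_latVec_swap], by rw [gram_neg, gram_swap, hgw],
        norm_neg _, ?_, ?_⟩
      · rw [inner_neg_right, neg_div]; linarith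
      · rw [inner_neg_right, neg_div]; exact (neg_le_abs _).trans hiw
  set c := (inner ℝ u z : ℝ) / ‖u‖ ^ 2 with hc
  have hcu : (inner ℝ u z : ℝ) = c * ‖u‖ ^ 2 := by rw [hc]; field_simp
  have hh : (A / ‖u‖) ^ 2 = ‖z‖ ^ 2 - c ^ 2 * ‖u‖ ^ 2 := by
    rw [div_pow, ← hz2, gram, hcu]
    field_simp
  refine ⟨‖u‖, A / ‖u‖, c, ⟨hu0, by positivity, hz4, hz5, ?_⟩, by field_simp, u, z, hz1, fun q => ?_⟩
  · rw [hh, hz3]; linarith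
  · rw [norm_latVec_sq, quad, mul_pow (A / ‖u‖), hh, hcu]
    ring

/-! ### Reduced forms and the energy as a sum over `ℤ × ℤ` -/

lemma quad_ge_half {a h c : ℝ} (r : Reduced a h c) (p : ℤ × ℤ) :
    a ^ 2 / 2 * ((p.1 : ℝ) ^ 2 + (p.2 : ℝ) ^ 2) ≤ quad a h c p := by
  have h1 : 0 ≤ c * ((p.1 : ℝ) + p.2) ^ 2 + (1 / 2 - c) * ((p.1 : ℝ) ^ 2 + (p.2 : ℝ) ^ 2) :=
    add_nonneg (mul_nonneg r.c_nonneg (sq_nonneg _))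
      (mul_nonneg (by linarith [r.c_le]) (by positivity))
  have h2 := mul_nonneg (sub_nonneg.2 r.le) (sq_nonneg (p.2 : ℝ))
  have h3 := mul_nonneg (sq_nonneg a) h1
  unfold quad
  nlinarith

lemma Reduced.height {a h c : ℝ} (r : Reduced a h c) : 3 / 4 * a ^ 2 ≤ h ^ 2 := by
  have h1 : c ^ 2 ≤ 1 / 4 := by nlinarith [r.c_nonneg, r.c_le]
  nlinarith [r.le, mul_le_mul_of_nonneg_left h1 (sq_nonneg a)]

/-- In a reduced basis the first vector is a shortest nonzero lattice vector. -/
lemma quad_ge {a h c : ℝ} (r : Reduced a h c) {p : ℤ × ℤ} (hp : p ≠ 0) :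
    a ^ 2 ≤ quad a h c p := by
  obtain ⟨m, n⟩ := p
  have ha := sq_nonneg a
  have hcast : ∀ k : ℤ, k ≠ 0 → (1 : ℝ) ≤ (k : ℝ) ^ 2 := fun k hk => by
    exact_mod_cast (Int.add_one_le_iff.2 (by positivity : 0 < k ^ 2))
  by_cases hn : n = 0
  · subst hn
    have hm : m ≠ 0 := by rintro rfl; exact hp rfl
    have := hcast m hm
    simp only [quad, Int.cast_zero]
    nlinarith
  by_cases h1 : n ^ 2 = 1
  · have h1' : (n : ℝ) ^ 2 = 1 := by exact_mod_cast h1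
    -- `|m + c n| ≥ c` because `c ≤ 1/2` and `n = ±1`
    have h2 : c ^ 2 ≤ ((m : ℝ) + c * n) ^ 2 := by
      by_cases hm : m = 0
      · subst hm
        rw [Int.cast_zero, zero_add, mul_pow, h1', mul_one]
      · have hmm := hcast m hm
        have h4 : 0 ≤ (m : ℝ) ^ 2 + 2 * c * (m * n) := by
          have : (n : ℝ) = 1 ∨ (n : ℝ) = -1 := by simpa using h1'
          have h5 : |(m : ℝ) * n| ≤ (m : ℝ) ^ 2 := by
            have hm1 : (1 : ℝ) ≤ |(m : ℝ)| := by
              rw [← sq_abs] at hmm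
              nlinarith [abs_nonneg (m : ℝ)]
            have hn1 : |(n : ℝ)| = 1 := by
              rcases this with h | h <;> simp [h]
            rw [abs_mul, hn1, ← sq_abs (m : ℝ)]
            nlinarith
          nlinarith [neg_abs_le ((m : ℝ) * n), abs_nonneg ((m : ℝ) * n), r.c_nonneg, r.c_le]
        nlinarith
    simp only [quad]
    nlinarith [r.le, mul_le_mul_of_nonneg_left h2 ha]
  · have h4 : (4 : ℝ) ≤ (n : ℝ) ^ 2 := by
      have : 4 ≤ n ^ 2 := by
        have h5 : 2 ≤ |n| := by
          by_contra! hlt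
          have : |n| = 1 := by have := abs_pos.2 hn; omega
          apply h1
          rw [← sq_abs, this, one_pow]
        nlinarith [sq_abs n]
      exact_mod_cast this
    simp only [quad]
    nlinarith [r.height, sq_nonneg (a * ((m : ℝ) + c * n)), sq_nonneg h]

/-- The sixth inverse power of the length of a lattice vector, and `0` at the origin because
`0⁻¹ = 0`. -/
def wt (a h c : ℝ) (p : ℤ × ℤ) : ℝ := (quad a h c p)⁻¹ ^ 3

/-- The Epstein zeta sum of exponent `6`. -/
def zeta6 (a h c : ℝ) : ℝ := ∑' p, wt a h c p

/-- The Epstein zeta sum of exponent `12`. -/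
def zeta12 (a h c : ℝ) : ℝ := ∑' p, wt a h c p ^ 2

lemma quad_nonneg (a h c : ℝ) (p : ℤ × ℤ) : 0 ≤ quad a h c p := by unfold quad; positivity

lemma wt_nonneg (a h c : ℝ) (p : ℤ × ℤ) : 0 ≤ wt a h c p :=
  pow_nonneg (inv_nonneg.2 (quad_nonneg a h c p)) 3

lemma wt_zero (a h c : ℝ) : wt a h c 0 = 0 := by simp [wt, quad]

lemma wt_le_of_le {a h c D : ℝ} {p : ℤ × ℤ} (hD : 0 < D) (hq : D ≤ quad a h c p) :
    wt a h c p ≤ D⁻¹ ^ 3 :=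
  pow_le_pow_left₀ (inv_nonneg.2 (quad_nonneg a h c p)) (inv_anti₀ hD hq) 3

lemma wt_le {a h c : ℝ} (r : Reduced a h c) (p : ℤ × ℤ) : wt a h c p ≤ (a ^ 2)⁻¹ ^ 3 := by
  have ha := r.a_pos
  by_cases hp : p = 0
  · rw [hp, wt_zero]; positivity
  · exact wt_le_of_le (by positivity) (quad_ge r hp)

lemma summable_int_inv_one_add_sq : Summable fun m : ℤ => ((1 : ℝ) + (m : ℝ) ^ 2)⁻¹ := by
  have h2 : Summable fun n : ℕ => 2 * (((n + 1 : ℕ) : ℝ) ^ 2)⁻¹ :=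
    ((summable_nat_add_iff 1).2 (Real.summable_nat_pow_inv.2 one_lt_two)).mul_left 2
  have h1 : Summable fun n : ℕ => ((1 : ℝ) + (n : ℝ) ^ 2)⁻¹ := by
    refine Summable.of_nonneg_of_le (fun n => by positivity) (fun n => ?_) h2
    rw [← div_eq_mul_inv, inv_eq_one_div, div_le_div_iff₀ (by positivity) (by positivity)]
    push_cast
    nlinarith [sq_nonneg ((n : ℝ) - 1)]
  refine Summable.of_nat_of_neg_add_one (by simpa using h1) ?_
  refine (((summable_nat_add_iff 1).2 h1)).congr fun n => ?_
  push_cast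
  congr 2
  ring

lemma summable_wt {a h c : ℝ} (r : Reduced a h c) : Summable (wt a h c) := by
  have ha := r.a_pos
  have hs := (summable_int_inv_one_add_sq.mul_of_nonneg summable_int_inv_one_add_sq
    (fun m => by positivity) (fun m => by positivity)).mul_left (32 * (a ^ 2)⁻¹ ^ 3)
  refine Summable.of_nonneg_of_le (wt_nonneg a h c) (fun p => ?_) hs
  by_cases hp : p = 0
  · rw [hp, wt_zero]; positivity
  have hN : (1 : ℝ) ≤ (p.1 : ℝ) ^ 2 + (p.2 : ℝ) ^ 2 := by
    have : 0 < p.1 ^ 2 + p.2 ^ 2 := by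
      rcases eq_or_ne p.1 0 with h1 | h1
      · have h2 : p.2 ≠ 0 := fun h2 => hp (Prod.ext h1 h2)
        positivity
      · positivity
    exact_mod_cast Int.add_one_le_iff.2 this
  set N := (p.1 : ℝ) ^ 2 + (p.2 : ℝ) ^ 2 with hNdef
  refine (wt_le_of_le (by positivity) (quad_ge_half r p)).trans ?_
  have e1 : (a ^ 2 / 2 * N)⁻¹ ^ 3 = 8 * (a ^ 2)⁻¹ ^ 3 * (N ^ 3)⁻¹ := by
    field_simp
    norm_num
  have e2 : (N ^ 3)⁻¹ ≤ 4 * ((1 + (p.1 : ℝ) ^ 2)⁻¹ * (1 + (p.2 : ℝ) ^ 2)⁻¹) := by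
    rw [← mul_inv, ← div_eq_mul_inv, inv_eq_one_div,
      div_le_div_iff₀ (by positivity) (by positivity)]
    have : (1 + (p.1 : ℝ) ^ 2) * (1 + (p.2 : ℝ) ^ 2) ≤ (1 + N) ^ 2 := by
      nlinarith [sq_nonneg (p.1 : ℝ), sq_nonneg (p.2 : ℝ),
        mul_nonneg (sq_nonneg (p.1 : ℝ)) (sq_nonneg (p.2 : ℝ))]
    nlinarith [mul_nonneg (sq_nonneg N) (sub_nonneg.2 hN)]
  calc _ = 8 * (a ^ 2)⁻¹ ^ 3 * (N ^ 3)⁻¹ := e1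
    _ ≤ 8 * (a ^ 2)⁻¹ ^ 3 * (4 * ((1 + (p.1 : ℝ) ^ 2)⁻¹ * (1 + (p.2 : ℝ) ^ 2)⁻¹)) := by gcongr
    _ = _ := by ring

lemma summable_wt_sq {a h c : ℝ} (r : Reduced a h c) : Summable fun p => wt a h c p ^ 2 := by
  refine Summable.of_nonneg_of_le (fun p => sq_nonneg _) (fun p => ?_)
    ((summable_wt r).mul_left ((a ^ 2)⁻¹ ^ 3))
  rw [sq]
  exact mul_le_mul_of_nonneg_right (wt_le r p) (wt_nonneg a h c p)

lemma VLJ_eq_s13 (r : ℝ) : VLJ r = ((r ^ 2)⁻¹ ^ 3) ^ 2 - 2 * (r ^ 2)⁻¹ ^ 3 := by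
  have h1 : r ^ (-12 : ℤ) = (r ^ 12)⁻¹ := by rw [zpow_neg]; rfl
  have h2 : r ^ (-6 : ℤ) = (r ^ 6)⁻¹ := by rw [zpow_neg]; rfl
  rw [VLJ, h1, h2]
  ring

lemma quad_pos {a h c : ℝ} (r : Reduced a h c) {p : ℤ × ℤ} (hp : p ≠ 0) : 0 < quad a h c p :=
  (pow_pos r.a_pos 2).trans_le (quad_ge r hp)

lemma ELJ_eq {L : Set R2} {a h c : ℝ} (r : Reduced a h c) (hL : HasForm L a h c) :
    ELJ L = zeta12 a h c - 2 * zeta6 a h c := by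
  obtain ⟨u, v, rfl, hq⟩ := hL
  have hinj : Function.Injective (latVec u v) := by
    intro p p' hpp
    by_contra hne
    have h1 := quad_pos r (sub_ne_zero.2 hne)
    have h2 : latVec u v (p - p') = latVec u v p - latVec u v p' := by
      simp only [latVec, Prod.fst_sub, Prod.snd_sub, Int.cast_sub]
      module
    rw [← hq, h2, hpp, sub_self] at h1
    simp at h1
  have hsub : ELJ (Set.range (latVec u v)) =
      ∑' x, Set.indicator {x : R2 | x ∈ Set.range (latVec u v) ∧ x ≠ 0} (fun x => VLJ ‖x‖) x :=
    tsum_subtype {x : R2 | x ∈ Set.range (latVec u v) ∧ x ≠ 0} (fun x => VLJ ‖x‖)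
  have h3 : ∀ p, Set.indicator {x : R2 | x ∈ Set.range (latVec u v) ∧ x ≠ 0} (fun x => VLJ ‖x‖)
      (latVec u v p) = wt a h c p ^ 2 - 2 * wt a h c p := by
    intro p
    rw [wt, ← hq, ← VLJ_eq_s13]
    by_cases h0 : latVec u v p = 0
    · rw [Set.indicator_of_notMem (fun hx => hx.2 h0), h0]
      simp [VLJ_eq_s13]
    · rw [Set.indicator_of_mem]
      exact ⟨⟨p, rfl⟩, h0⟩
  rw [hsub, ← hinj.tsum_eq, tsum_congr h3, (summable_wt_sq r).tsum_sub ((summable_wt r).mul_left 2),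
    tsum_mul_left, zeta12, zeta6]
  intro x hx
  exact (Set.mem_of_indicator_ne_zero hx).1

/-- Every reduced form is realised by the basis `(a, 0)`, `(a c, h)`. -/
lemma exists_hasForm {a h c : ℝ} (r : Reduced a h c) : ∃ L, IsBravais L ∧ HasForm L a h c := by
  have ha := r.a_pos
  have hh := r.h_pos
  have hform : ∀ s t : ℝ, ‖s • vec2 a 0 + t • vec2 (a * c) h‖ ^ 2
      = (a * (s + c * t)) ^ 2 + (h * t) ^ 2 := by
    intro s t
    rw [EuclideanSpace.norm_sq_eq]
    simp [vec2, Fin.sum_univ_two]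
    ring
  refine ⟨_, ⟨vec2 a 0, vec2 (a * c) h, ?_, (range_latVec _ _)⟩, vec2 a 0, vec2 (a * c) h, rfl,
    fun p => hform _ _⟩
  rw [LinearIndependent.pair_iff]
  intro s t hst
  have h0 := hform s t
  rw [hst, norm_zero] at h0
  have ht : t = 0 := by
    have : (h * t) ^ 2 = 0 := by nlinarith [sq_nonneg (a * (s + c * t)), sq_nonneg (h * t)]
    simpa [hh.ne'] using this
  subst ht
  have : (a * s) ^ 2 = 0 := by nlinarith
  exact ⟨by simpa [ha.ne'] using this, rfl⟩

lemma Reduced.scale {a h c ρ : ℝ} (r : Reduced a h c) (hρ : 0 < ρ) :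
    Reduced (ρ * a) (ρ * h) c :=
  ⟨mul_pos hρ r.a_pos, mul_pos hρ r.h_pos, r.c_nonneg, r.c_le, by
    nlinarith [mul_le_mul_of_nonneg_left r.le (sq_nonneg ρ)]⟩

lemma wt_scale (a h c ρ : ℝ) (p : ℤ × ℤ) :
    wt (ρ * a) (ρ * h) c p = (ρ ^ 2)⁻¹ ^ 3 * wt a h c p := by
  rw [wt, wt, ← mul_pow, ← mul_inv]
  congr 2
  simp only [quad]
  ring

lemma zeta6_ge {a h c : ℝ} (r : Reduced a h c) (p : ℤ × ℤ) : wt a h c p ≤ zeta6 a h c :=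
  (summable_wt r).le_tsum p fun _ _ => wt_nonneg a h c _

lemma zeta12_ge {a h c : ℝ} (r : Reduced a h c) (s : Finset (ℤ × ℤ)) :
    ∑ p ∈ s, wt a h c p ^ 2 ≤ zeta12 a h c :=
  (summable_wt_sq r).sum_le_tsum s fun _ _ => sq_nonneg _

/-! ### Dilations and the triangular lattice -/

/-- Virial identity: if no dilation lowers the energy, the two zeta sums agree. The energy of the
lattice dilated by `ρ` is `t ^ 2 * zeta12 - 2 * t * zeta6` with `t = ρ ^ (-6)`; its minimum over `t`
is attained at `t = zeta6 / zeta12` only. -/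
lemma zeta_eq_of_min {a h c : ℝ} (r : Reduced a h c)
    (hmin : ∀ a' h' c', Reduced a' h' c' →
      zeta12 a h c - 2 * zeta6 a h c ≤ zeta12 a' h' c' - 2 * zeta6 a' h' c') :
    zeta12 a h c = zeta6 a h c := by
  have ha := r.a_pos
  have hw : 0 < wt a h c (1, 0) := by
    simp only [wt, quad]
    norm_num
    positivity
  have hQ : 0 < zeta6 a h c := hw.trans_le (zeta6_ge r _)
  have hP : 0 < zeta12 a h c := by
    have := zeta12_ge r {(1, 0)}
    rw [Finset.sum_singleton] at this
    exact (pow_pos hw 2).trans_le this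
  obtain ⟨ρ, hρ, hρt⟩ : ∃ ρ : ℝ, 0 < ρ ∧ ρ ^ 6 = zeta12 a h c / zeta6 a h c := by
    refine ⟨(zeta12 a h c / zeta6 a h c) ^ ((6 : ℕ) : ℝ)⁻¹, by positivity, ?_⟩
    exact Real.rpow_inv_natCast_pow (by positivity) (by norm_num)
  have ht : (ρ ^ 2)⁻¹ ^ 3 = zeta6 a h c / zeta12 a h c := by
    rw [inv_pow, ← pow_mul, hρt, inv_div]
  have h6 : zeta6 (ρ * a) (ρ * h) c = zeta6 a h c / zeta12 a h c * zeta6 a h c := by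
    rw [zeta6, tsum_congr (wt_scale a h c ρ), tsum_mul_left, ht, ← zeta6]
  have h12 : zeta12 (ρ * a) (ρ * h) c = (zeta6 a h c / zeta12 a h c) ^ 2 * zeta12 a h c := by
    rw [zeta12, tsum_congr fun p => by rw [wt_scale a h c ρ, mul_pow], tsum_mul_left, ht, ← zeta12]
  have := hmin _ _ _ (r.scale hρ)
  rw [h6, h12] at this
  have e : (zeta6 a h c / zeta12 a h c) ^ 2 * zeta12 a h c
      - 2 * (zeta6 a h c / zeta12 a h c * zeta6 a h c) = - zeta6 a h c ^ 2 / zeta12 a h c := by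
    field_simp
    ring
  rw [e, le_div_iff₀ hP] at this
  have h0 : (zeta12 a h c - zeta6 a h c) ^ 2 ≤ 0 := by nlinarith
  exact sub_eq_zero.1 (by simpa using le_antisymm h0 (sq_nonneg _))

/-- The triangular lattice of minimal length `1`, with the vectors of coordinates at most `2`
taken into account, has energy below `-6.62`. -/
lemma triangular_energy :
    Reduced 1 (√3 / 2) (1 / 2) ∧
      zeta12 1 (√3 / 2) (1 / 2) - 2 * zeta6 1 (√3 / 2) (1 / 2) ≤ -6.62 := by
  have h3 : (√3 / 2) ^ 2 = 3 / 4 := by rw [div_pow, Real.sq_sqrt (by norm_num)]; norm_num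
  have r : Reduced 1 (√3 / 2) (1 / 2) :=
    ⟨one_pos, by positivity, by norm_num, le_rfl, by rw [h3]; norm_num⟩
  refine ⟨r, ?_⟩
  have hs := ((summable_wt r).mul_left 2).sub (summable_wt_sq r)
  have hle := hs.sum_le_tsum (Finset.Icc (-2) 2 ×ˢ Finset.Icc (-2) 2) (fun p _ => by
    have h1 := wt_le r p
    have h0 := wt_nonneg 1 (√3 / 2) (1 / 2) p
    norm_num at h1
    nlinarith)
  rw [((summable_wt r).mul_left 2).tsum_sub (summable_wt_sq r), tsum_mul_left, ← zeta12,
    ← zeta6, Finset.sum_product] at hle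
  have hI : Finset.Icc (-2 : ℤ) 2 = {-2, -1, 0, 1, 2} := by decide
  have hq : ∀ p, wt 1 (√3 / 2) (1 / 2) p = (((p.1 : ℝ) + 1 / 2 * p.2) ^ 2 + 3 / 4 * p.2 ^ 2)⁻¹ ^ 3 := by
    intro p
    rw [wt, quad, mul_pow (√3 / 2), h3, one_mul]
  simp only [hq, hI] at hle
  norm_num at hle
  norm_num
  linarith

/-! ### Numerical bounds for one-dimensional sums -/

lemma summable_inv_pow (s : ℕ) (hs : 1 < s) : Summable fun n : ℕ => (((n : ℝ) + 2) ^ s)⁻¹ :=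
  ((summable_nat_add_iff 2).2 (Real.summable_nat_pow_inv.2 hs)).congr fun n => by push_cast; rfl

/-- `∑_{j ≥ 3} j⁻³ ≤ 1 / 12`, by comparison with the telescoping series of
`1 / ((j - 1) j (j + 1))`. -/
lemma tsum_inv_cube_tail : ∑' n : ℕ, (((n : ℝ) + 3) ^ 3)⁻¹ ≤ 1 / 12 := by
  refine Real.tsum_le_of_sum_range_le (fun n => by positivity) fun n => ?_
  have : ∑ i ∈ Finset.range n, (((i : ℝ) + 3) ^ 3)⁻¹
      ≤ 1 / 12 - 1 / (2 * ((n : ℝ) + 2) * (n + 3)) := by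
    induction n with
    | zero => norm_num
    | succ n ih =>
      rw [Finset.sum_range_succ]
      have h1 : (((n : ℝ) + 3) ^ 3)⁻¹ ≤ 1 / (((n : ℝ) + 2) * (n + 3) * (n + 4)) := by
        rw [inv_eq_one_div]
        refine one_div_le_one_div_of_le (by positivity) ?_
        have : (0 : ℝ) ≤ n := n.cast_nonneg
        nlinarith
      have h2 : 1 / (((n : ℝ) + 2) * (n + 3) * (n + 4))
          = 1 / (2 * ((n : ℝ) + 2) * (n + 3)) - 1 / (2 * ((n : ℝ) + 3) * (n + 4)) := by
        field_simp
        ring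
      have h3 : 1 / (2 * (((n + 1 : ℕ) : ℝ) + 2) * ((n + 1 : ℕ) + 3))
          = 1 / (2 * ((n : ℝ) + 3) * (n + 4)) := by
        push_cast
        congr 2 <;> ring
      rw [h3]
      linarith
  refine this.trans (sub_le_self _ (by positivity))

lemma tsum_inv_cube : ∑' n : ℕ, (((n : ℝ) + 2) ^ 3)⁻¹ ≤ 5 / 24 := by
  rw [(summable_inv_pow 3 (by norm_num)).tsum_eq_zero_add]
  have : ∀ n : ℕ, ((((n + 1 : ℕ) : ℝ) + 2) ^ 3)⁻¹ = (((n : ℝ) + 3) ^ 3)⁻¹ := fun n => by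
    push_cast; congr 2; ring
  rw [tsum_congr this]
  have := tsum_inv_cube_tail
  norm_num at this ⊢
  linarith

lemma tsum_inv_six : ∑' n : ℕ, (((n : ℝ) + 2) ^ 6)⁻¹ ≤ 0.01872 := by
  have e : ∀ n : ℕ, ((((n + 1 : ℕ) : ℝ) + 2) ^ 6)⁻¹ = (((n : ℝ) + 3) ^ 6)⁻¹ := fun n => by
    push_cast; congr 2; ring
  have s6 := (summable_nat_add_iff 1).2 (summable_inv_pow 6 (by norm_num))
  have s3 := (summable_nat_add_iff 1).2 (summable_inv_pow 3 (by norm_num))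
  have e3 : ∀ n : ℕ, ((((n + 1 : ℕ) : ℝ) + 2) ^ 3)⁻¹ = (((n : ℝ) + 3) ^ 3)⁻¹ := fun n => by
    push_cast; congr 2; ring
  have h1 : ∑' n : ℕ, (((n : ℝ) + 3) ^ 6)⁻¹ ≤ ∑' n : ℕ, 1 / 27 * (((n : ℝ) + 3) ^ 3)⁻¹ := by
    refine Summable.tsum_le_tsum (fun n => ?_) (s6.congr e) ((s3.congr e3).mul_left _)
    have h27 : (27 : ℝ) ≤ ((n : ℝ) + 3) ^ 3 := by
      have : (3 : ℝ) ^ 3 ≤ ((n : ℝ) + 3) ^ 3 :=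
        pow_le_pow_left₀ (by norm_num) (by linarith [n.cast_nonneg (α := ℝ)]) 3
      norm_num at this ⊢
      exact this
    have h2 : (((n : ℝ) + 3) ^ 6)⁻¹ = (((n : ℝ) + 3) ^ 3)⁻¹ * (((n : ℝ) + 3) ^ 3)⁻¹ := by
      rw [← mul_inv, ← pow_add]
    rw [h2]
    refine mul_le_mul_of_nonneg_right ?_ (by positivity)
    rw [one_div]
    exact inv_anti₀ (by norm_num) h27
  rw [tsum_mul_left] at h1
  rw [(summable_inv_pow 6 (by norm_num)).tsum_eq_zero_add, tsum_congr e]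
  have := tsum_inv_cube_tail
  norm_num at this ⊢
  linarith

lemma tsum_seq_le {f : ℕ → ℝ} {D E : ℝ} (hs : Summable f) (hE : 0 ≤ E) (h0 : f 0 ≤ D)
    (h : ∀ k : ℕ, f (k + 1) ≤ E * (((k : ℝ) + 1) ^ 3)⁻¹) : ∑' n, f n ≤ D + 29 / 24 * E := by
  have hs1 := (summable_nat_add_iff 1).2 hs
  have hs2 := (summable_nat_add_iff 1).2 hs1
  rw [hs.tsum_eq_zero_add, hs1.tsum_eq_zero_add]
  have h1 : f (0 + 1) ≤ E := by simpa using h 0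
  have h2 : ∑' n, f (n + 1 + 1) ≤ ∑' n : ℕ, E * (((n : ℝ) + 2) ^ 3)⁻¹ := by
    refine Summable.tsum_le_tsum (fun n => (h (n + 1)).trans_eq ?_) hs2
      ((summable_inv_pow 3 (by norm_num)).mul_left E)
    push_cast
    congr 3
    ring
  rw [tsum_mul_left] at h2
  have := mul_le_mul_of_nonneg_left tsum_inv_cube hE
  linarith

lemma summable_nat_of_int {f : ℤ → ℝ} (hs : Summable f) : Summable fun n : ℕ => f n :=
  hs.comp_injective Nat.cast_injective

lemma summable_neg_of_int {f : ℤ → ℝ} (hs : Summable f) :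
    Summable fun n : ℕ => f (-((n : ℤ) + 1)) :=
  hs.comp_injective (i := fun n : ℕ => -((n : ℤ) + 1)) fun m n h => by
    simp only at h
    omega

lemma tsum_int_even {f : ℤ → ℝ} (hs : Summable f) (he : ∀ n, f (-n) = f n) :
    ∑' n, f n = f 0 + 2 * f 1 + 2 * ∑' k : ℕ, f (k + 2) := by
  have hn := summable_nat_of_int hs
  have hn1 := (summable_nat_add_iff 1).2 hn
  have e : ∀ n : ℕ, f (-((n : ℤ) + 1)) = f ((n + 1 : ℕ) : ℤ) := fun n => by
    rw [he]; push_cast; rfl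
  rw [tsum_of_nat_of_neg_add_one hn (summable_neg_of_int hs), tsum_congr e, hn.tsum_eq_zero_add,
    hn1.tsum_eq_zero_add]
  have e2 : ∀ n : ℕ, f ((n + 1 + 1 : ℕ) : ℤ) = f ((n : ℤ) + 2) := fun n => by
    push_cast; congr 1
  rw [tsum_congr e2]
  simp
  ring

/-- A sum over a shifted row `ℤ + t` whose terms are at most `D`, and at most `E d⁻³` at distance
`d` from the origin: among the points of `ℤ + t` on either side of the origin, the `n`-th one
(counted from `0`) is at distance at least `n`. -/
lemma tsum_row_le {f : ℤ → ℝ} {t D E : ℝ} (hs : Summable f) (hE : 0 ≤ E) (hD : ∀ m, f m ≤ D)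
    (h : ∀ (m : ℤ) (d : ℝ), 0 < d → d ≤ |m + t| → f m ≤ E * (d ^ 3)⁻¹) :
    ∑' m, f m ≤ 2 * (D + 29 / 24 * E) := by
  obtain ⟨g, hg⟩ : ∃ g : ℤ → ℝ, ∀ m, g m = f (m - ⌊t⌋) := ⟨_, fun _ => rfl⟩
  have hgs : Summable g := by
    rw [funext hg]
    exact (Equiv.subRight ⌊t⌋).summable_iff.2 hs
  have e : ∑' m, f m = ∑' m, g m := by
    rw [tsum_congr hg]
    exact ((Equiv.subRight ⌊t⌋).tsum_eq f).symm
  have f0 := Int.floor_le t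
  have f1 := Int.lt_floor_add_one t
  have hr : ∀ k : ℕ, g ((k + 1 : ℕ) : ℤ) ≤ E * (((k : ℝ) + 1) ^ 3)⁻¹ := fun k => by
    rw [hg]
    refine h _ ((k : ℝ) + 1) (by positivity) (le_trans ?_ (le_abs_self _))
    push_cast
    linarith
  have hl : ∀ k : ℕ, g (-(((k + 1 : ℕ) : ℤ) + 1)) ≤ E * (((k : ℝ) + 1) ^ 3)⁻¹ := fun k => by
    rw [hg]
    refine h _ ((k : ℝ) + 1) (by positivity) (le_trans ?_ (neg_le_abs _))
    push_cast
    linarith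
  have hgD : ∀ m, g m ≤ D := fun m => by rw [hg]; exact hD _
  rw [e, tsum_of_nat_of_neg_add_one (summable_nat_of_int hgs) (summable_neg_of_int hgs), two_mul]
  exact add_le_add (tsum_seq_le (summable_nat_of_int hgs) hE (hgD _) hr)
    (tsum_seq_le (summable_neg_of_int hgs) hE (hgD _) hl)

/-! ### Summation by rows -/

lemma quad_neg (a h c : ℝ) (p : ℤ × ℤ) : quad a h c (-p) = quad a h c p := by
  simp only [quad, Prod.fst_neg, Prod.snd_neg, Int.cast_neg]
  ring

lemma wt_neg (a h c : ℝ) (p : ℤ × ℤ) : wt a h c (-p) = wt a h c p := by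
  rw [wt, quad_neg, wt]

/-- Summation over `ℤ × ℤ` by rows, opposite rows having equal sums. -/
lemma tsum_rows {F : ℤ × ℤ → ℝ} (hs : Summable F) (he : ∀ p, F (-p) = F p) :
    (Summable fun n : ℤ => ∑' m : ℤ, F (m, n)) ∧
    ∑' p, F p = ∑' m : ℤ, F (m, 0) + 2 * ∑' m : ℤ, F (m, 1)
      + 2 * ∑' k : ℕ, ∑' m : ℤ, F (m, (k : ℤ) + 2) := by
  have hs' : Summable fun p : ℤ × ℤ => F p.swap := (Equiv.prodComm ℤ ℤ).summable_iff.2 hs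
  have e : ∑' p, F p = ∑' p : ℤ × ℤ, F p.swap := ((Equiv.prodComm ℤ ℤ).tsum_eq F).symm
  refine ⟨hs'.prod, ?_⟩
  rw [e, hs'.tsum_prod]
  refine tsum_int_even hs'.prod fun n => ?_
  rw [← (Equiv.neg ℤ).tsum_eq]
  exact tsum_congr fun m => he (m, n)

lemma summable_row {F : ℤ × ℤ → ℝ} (hs : Summable F) (n : ℤ) : Summable fun m : ℤ => F (m, n) :=
  hs.comp_injective (i := fun m : ℤ => (m, n)) fun _ _ h => (Prod.ext_iff.1 h).1

/-- By the arithmetic-geometric mean inequality, a vector of the `n`-th row at horizontal distance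
`a d` has squared length at least `2 (a h) n d`. -/
lemma quad_ge_prod {a h c d : ℝ} (r : Reduced a h c) {m n : ℤ} (hn : 0 ≤ n) (hd : 0 ≤ d)
    (hdm : d ≤ |(m : ℝ) + c * n|) : 2 * (a * h) * n * d ≤ quad a h c (m, n) := by
  have hn' : (0 : ℝ) ≤ n := by exact_mod_cast hn
  have h1 : a * d ≤ |a * ((m : ℝ) + c * n)| := by
    rw [abs_mul, abs_of_pos r.a_pos]
    exact mul_le_mul_of_nonneg_left hdm r.a_pos.le
  have h2 : (a * d) ^ 2 ≤ (a * ((m : ℝ) + c * n)) ^ 2 := by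
    rw [← sq_abs (a * ((m : ℝ) + c * n))]
    exact pow_le_pow_left₀ (mul_nonneg r.a_pos.le hd) h1 2
  simp only [quad]
  nlinarith [sq_nonneg (a * d - h * n)]

lemma row_le {a h c D B : ℝ} (r : Reduced a h c) {n : ℤ} (hn : 0 < n) (hD : 0 < D) (hB : 0 < B)
    (hDq : ∀ m, D ≤ quad a h c (m, n)) (hBA : B ≤ 2 * (a * h)) :
    ∑' m : ℤ, wt a h c (m, n) ≤ 2 * (D⁻¹ ^ 3 + 29 / 24 * (B * n)⁻¹ ^ 3) := by
  have hn' : (0 : ℝ) < n := by exact_mod_cast hn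
  refine tsum_row_le (t := c * n) (summable_row (summable_wt r) n) (by positivity)
    (fun m => wt_le_of_le hD (hDq m)) fun m d hd hdm => ?_
  have h1 := quad_ge_prod r hn.le hd.le hdm
  have h2 : B * n * d ≤ 2 * (a * h) * n * d := by gcongr
  refine (wt_le_of_le (by positivity) (h2.trans h1)).trans_eq ?_
  rw [mul_inv, mul_pow, inv_pow d]

lemma quad_ge_height (a h c : ℝ) (m n : ℤ) : h ^ 2 * (n : ℝ) ^ 2 ≤ quad a h c (m, n) := by
  simp only [quad]
  nlinarith [sq_nonneg (a * ((m : ℝ) + c * n))]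

lemma wt_row_zero (a h c : ℝ) (m : ℤ) :
    wt a h c (m, 0) = (a ^ 2)⁻¹ ^ 3 * ((m : ℝ) ^ 6)⁻¹ := by
  simp only [wt, quad, Int.cast_zero, mul_zero, add_zero]
  rw [zero_pow two_ne_zero, add_zero, mul_pow, mul_inv, mul_pow, inv_pow ((m : ℝ) ^ 2), ← pow_mul]

lemma inv_pow_six_succ_succ (k : ℕ) : ((((k : ℤ) + 2 : ℤ) : ℝ) ^ 6)⁻¹ = (((k : ℝ) + 2) ^ 6)⁻¹ := by
  push_cast; rfl

/-- Summation of the rows of index `n ≥ 2`, when the `n`-th one is at most `α n⁻⁶ + β n⁻³`. -/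
lemma tsum_far_rows_le {F : ℤ → ℝ} {α β : ℝ} (hs : Summable F) (hα : 0 ≤ α) (hβ : 0 ≤ β)
    (h : ∀ k : ℕ, F ((k : ℤ) + 2) ≤ α * (((k : ℝ) + 2) ^ 6)⁻¹ + β * (((k : ℝ) + 2) ^ 3)⁻¹) :
    ∑' k : ℕ, F ((k : ℤ) + 2) ≤ α * 0.01872 + β * (5 / 24) := by
  have s1 := (summable_inv_pow 6 (by norm_num)).mul_left α
  have s2 := (summable_inv_pow 3 (by norm_num)).mul_left β
  have hs' : Summable fun k : ℕ => F ((k : ℤ) + 2) :=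
    hs.comp_injective (i := fun k : ℕ => (k : ℤ) + 2) fun m n h => by
      simp only at h
      omega
  refine (Summable.tsum_le_tsum h hs' (s1.add s2)).trans ?_
  rw [s1.tsum_add s2, tsum_mul_left, tsum_mul_left]
  exact add_le_add (mul_le_mul_of_nonneg_left tsum_inv_six hα)
    (mul_le_mul_of_nonneg_left tsum_inv_cube hβ)

/-! ### The lower bound for the area -/

lemma zeta6_le {a h c : ℝ} (r : Reduced a h c) : zeta6 a h c ≤ 8.5 * (a ^ 2)⁻¹ ^ 3 := by
  have ha := r.a_pos
  have hh := r.height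
  have hB : 3 / 2 * a ^ 2 ≤ 2 * (a * h) := by
    have : 3 / 4 * a ≤ h := by
      by_contra! hlt
      nlinarith [r.h_pos]
    nlinarith
  set x := (a ^ 2)⁻¹ ^ 3 with hx
  have hx0 : 0 ≤ x := by positivity
  obtain ⟨hsr, hsum⟩ := tsum_rows (summable_wt r) (wt_neg a h c)
  rw [zeta6, hsum]
  have r0 : ∑' m : ℤ, wt a h c (m, 0) ≤ 2 * x * 1.01872 := by
    rw [tsum_int_even (summable_row (summable_wt r) 0) fun n => by
      simp only [wt_row_zero, Int.cast_neg]; congr 2; ring]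
    simp only [wt_row_zero, inv_pow_six_succ_succ]
    rw [tsum_mul_left, ← hx]
    have := mul_le_mul_of_nonneg_left tsum_inv_six hx0
    norm_num
    norm_num at this
    linarith
  have r1 : ∑' m : ℤ, wt a h c (m, 1) ≤ 2 * (x + 29 / 24 * (3 / 2 * a ^ 2 * (1 : ℤ))⁻¹ ^ 3) :=
    row_le r one_pos (by positivity) (by positivity)
      (fun m => quad_ge r (by simp [Prod.ext_iff])) hB
  have e1 : (3 / 2 * a ^ 2 * ((1 : ℤ) : ℝ))⁻¹ ^ 3 = 8 / 27 * x := by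
    rw [hx, Int.cast_one, mul_one, mul_inv, mul_pow]
    norm_num
  rw [e1] at r1
  have r2 : ∑' k : ℕ, ∑' m : ℤ, wt a h c (m, (k : ℤ) + 2)
      ≤ 16 * x * 0.01872 + (29 / 12 * (8 / 27)) * x * (5 / 24) := by
    refine tsum_far_rows_le hsr (by positivity) (by positivity) fun k => ?_
    refine (row_le r (by positivity) (D := a ^ 2 / 2 * ((k : ℝ) + 2) ^ 2) (by positivity)
      (by positivity) (fun m => ?_) hB).trans_eq ?_
    · refine le_trans ?_ (quad_ge_height a h c m _)
      push_cast
      exact mul_le_mul_of_nonneg_right (by linarith [sq_nonneg a]) (by positivity)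
    · rw [hx]
      push_cast
      field_simp
      ring
  norm_num at r2 r0 ⊢
  linarith

lemma area_gt {a h c : ℝ} (r : Reduced a h c) (heq : zeta12 a h c = zeta6 a h c) :
    0.47468 < a * h := by
  have ha := r.a_pos
  have hh := r.height
  have h1 := zeta6_le r
  have h2 := zeta12_ge r {(1, 0), (-1, 0)}
  rw [Finset.sum_pair (by decide), wt_row_zero, wt_row_zero] at h2
  norm_num at h2
  set x := (a ^ 2)⁻¹ ^ 3 with hx
  have hx0 : 0 < x := by positivity
  have hxa : x * a ^ 6 = 1 := by
    rw [hx]; field_simp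
  have e : (((a ^ 2) ^ 3) ^ 2)⁻¹ = x ^ 2 := by rw [hx, inv_pow, inv_pow]
  rw [e, heq] at h2
  have hx4 : x ≤ 4.25 := by
    norm_num at h1 ⊢
    nlinarith
  have h6 : 1 ≤ 4.25 * a ^ 6 := by
    rw [← hxa]
    exact mul_le_mul_of_nonneg_right hx4 (by positivity)
  by_contra! hlt
  have hA0 : 0 < a * h := mul_pos ha r.h_pos
  have h3 : (a * h) ^ 2 ≤ 0.47468 ^ 2 := pow_le_pow_left₀ hA0.le hlt 2
  have h4 : 3 / 4 * (a ^ 2) ^ 2 ≤ (a * h) ^ 2 := by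
    rw [mul_pow]
    nlinarith [mul_le_mul_of_nonneg_left hh (sq_nonneg a)]
  -- `a ^ 4 ≤ 0.3005` gives `a ^ 2 ≤ 0.55`, hence `a ^ 6 ≤ 0.17`.
  have h5 : a ^ 2 ≤ 0.55 := by
    by_contra! h
    norm_num at h h3
    nlinarith
  have h7 : (a ^ 2) ^ 3 ≤ 0.55 ^ 3 := pow_le_pow_left₀ (sq_nonneg a) h5 3
  norm_num at h6 h7
  nlinarith

/-! ### The upper bound for the area -/

/-- If all nonzero lattice vectors were longer than `1`, every term of `zeta12` would be smaller than the
corresponding term of `zeta6`. -/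
lemma a_le_one {a h c : ℝ} (r : Reduced a h c) (heq : zeta12 a h c = zeta6 a h c) : a ≤ 1 := by
  by_contra! hlt
  have hs := (summable_wt r).sub (summable_wt_sq r)
  have ha2 : 1 < a ^ 2 := by nlinarith
  have hx : (a ^ 2)⁻¹ ^ 3 < 1 := pow_lt_one₀ (by positivity) (inv_lt_one_of_one_lt₀ ha2) (by norm_num)
  have h0 : ∀ p, 0 ≤ wt a h c p - wt a h c p ^ 2 := fun p => by
    nlinarith [wt_nonneg a h c p, wt_le r p]
  have h1 := hs.le_tsum (1, 0) fun p _ => h0 p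
  rw [(summable_wt r).tsum_sub (summable_wt_sq r), ← zeta6, ← zeta12, heq, sub_self,
    wt_row_zero] at h1
  have : 0 < (a ^ 2)⁻¹ ^ 3 := by have := r.a_pos; positivity
  norm_num only [one_pow, Int.cast_one, inv_one, mul_one] at h1
  nlinarith

/-- The weight `(3/2) r⁻⁶ - (1/2) r⁻¹²`. Where the two zeta sums agree, its sum over the lattice
is their common value; as a function of `r⁻⁶` it is bounded above. -/
def mix (a h c : ℝ) (p : ℤ × ℤ) : ℝ := 3 / 2 * wt a h c p - 1 / 2 * wt a h c p ^ 2

lemma mix_le (a h c : ℝ) (p : ℤ × ℤ) : mix a h c p ≤ 3 / 2 * wt a h c p := by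
  unfold mix
  nlinarith [sq_nonneg (wt a h c p)]

lemma summable_mix {a h c : ℝ} (r : Reduced a h c) : Summable (mix a h c) :=
  ((summable_wt r).mul_left _).sub ((summable_wt_sq r).mul_left _)

lemma tsum_mix {a h c : ℝ} (r : Reduced a h c) (heq : zeta12 a h c = zeta6 a h c) :
    ∑' p, mix a h c p = zeta6 a h c := by
  unfold mix
  rw [((summable_wt r).mul_left _).tsum_sub ((summable_wt_sq r).mul_left _), tsum_mul_left,
    tsum_mul_left, ← zeta6, ← zeta12, heq]
  ring

lemma mix_row_zero {a h c : ℝ} (r : Reduced a h c) : ∑' m : ℤ, mix a h c (m, 0) ≤ 2.3351 := by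
  set x := (a ^ 2)⁻¹ ^ 3 with hx
  have hx0 : 0 ≤ x := by positivity
  have hs := summable_row (summable_mix r) 0
  rw [tsum_int_even hs fun n => by
      simp only [mix, wt_row_zero, Int.cast_neg, Even.neg_pow (by decide : Even 6)]]
  have h0 : mix a h c (0, 0) = 0 := by simp [mix, wt_row_zero]
  have h1 : mix a h c (1, 0) = 3 / 2 * x - 1 / 2 * x ^ 2 := by simp [mix, wt_row_zero, hx]
  have h2 : ∑' k : ℕ, mix a h c ((k : ℤ) + 2, 0) ≤ 3 / 2 * x * 0.01872 + 0 * (5 / 24) := by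
    refine tsum_far_rows_le hs (by positivity) le_rfl fun k => ?_
    refine (mix_le a h c _).trans_eq ?_
    rw [wt_row_zero, inv_pow_six_succ_succ, ← hx]
    ring
  rw [h0, h1]
  norm_num at h2 ⊢
  -- `1.52808 = (3/2) * 1.01872`, and `2 * 1.52808 * x - x²` is maximal at `x = 1.52808`.
  nlinarith [sq_nonneg (x - 1.52808)]

/-- A sum over `ℤ` whose terms at `0, -1, 1, -2, 2, …` are compared with the sequence
`α, β, 3/2 · 2⁻³, 3/2 · 3⁻³, 3/2 · 4⁻³, …`. -/
lemma tsum_interlaced_le {g : ℤ → ℝ} {α β : ℝ} (hs : Summable g) (h0 : g 0 ≤ α) (h1 : g (-1) ≤ β)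
    (hr : ∀ k : ℕ, g ((k + 1 : ℕ) : ℤ) ≤ 3 / 2 * ((((2 * k : ℕ) : ℝ) + 2) ^ 3)⁻¹)
    (hl : ∀ k : ℕ, g (-(((k + 1 : ℕ) : ℤ) + 1)) ≤ 3 / 2 * ((((2 * k + 1 : ℕ) : ℝ) + 2) ^ 3)⁻¹) :
    ∑' m, g m ≤ α + β + 3 / 2 * (5 / 24) := by
  have hsn := summable_nat_of_int hs
  have hsm := summable_neg_of_int hs
  obtain ⟨φ, hφ⟩ : ∃ φ : ℕ → ℝ, ∀ n : ℕ, φ n = 3 / 2 * (((n : ℝ) + 2) ^ 3)⁻¹ :=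
    ⟨_, fun _ => rfl⟩
  have s3 : Summable φ := by
    rw [funext hφ]
    exact (summable_inv_pow 3 (by norm_num)).mul_left _
  have se : Summable fun k : ℕ => φ (2 * k) :=
    s3.comp_injective (i := fun k : ℕ => 2 * k) fun m n h => by simpa using h
  have so : Summable fun k : ℕ => φ (2 * k + 1) :=
    s3.comp_injective (i := fun k : ℕ => 2 * k + 1) fun m n h => by simpa using h
  have b0 : ∑' k : ℕ, g ((k + 1 : ℕ) : ℤ) ≤ ∑' k : ℕ, φ (2 * k) :=
    Summable.tsum_le_tsum (fun k => (hr k).trans_eq (hφ _).symm)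
      ((summable_nat_add_iff 1).2 hsn) se
  have b1 : ∑' k : ℕ, g (-(((k + 1 : ℕ) : ℤ) + 1)) ≤ ∑' k : ℕ, φ (2 * k + 1) :=
    Summable.tsum_le_tsum (fun k => (hl k).trans_eq (hφ _).symm)
      ((summable_nat_add_iff 1).2 hsm) so
  have b2 := tsum_even_add_odd se so
  rw [tsum_congr hφ, tsum_mul_left] at b2
  have b3 := tsum_inv_cube
  rw [tsum_of_nat_of_neg_add_one hsn hsm, hsn.tsum_eq_zero_add, hsm.tsum_eq_zero_add]
  have e1 : g ((0 : ℕ) : ℤ) = g 0 := by rw [Nat.cast_zero]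
  have e2 : g (-(((0 : ℕ) : ℤ) + 1)) = g (-1) := by rw [Nat.cast_zero, zero_add]
  rw [e1, e2]
  linarith

/-- The adjacent row. Since `0 ≤ c ≤ 1/2`, its points lie at horizontal distances at least
`0, a/2, a, 3a/2, …`, hence, the area being at least `1`, at squared distances at least
`1, 5/4, 2, 3, 4, …`. -/
lemma mix_row_one {a h c : ℝ} (r : Reduced a h c) (ha1 : a ≤ 1) (hA : 1 ≤ a * h) :
    ∑' m : ℤ, mix a h c (m, 1) ≤ 1.94943 := by
  have ha := r.a_pos
  have hc0 := r.c_nonneg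
  have hc1 := r.c_le
  have hs := summable_row (summable_mix r) 1
  have hh : 1 ≤ h := by nlinarith [r.h_pos]
  have m0 : mix a h c (0, 1) ≤ 1 := by
    have hw : wt a h c (0, 1) ≤ (1 : ℝ)⁻¹ ^ 3 := by
      refine wt_le_of_le one_pos (le_trans ?_ (quad_ge_height a h c _ _))
      rw [Int.cast_one, one_pow, mul_one]
      nlinarith
    norm_num at hw
    simp only [mix]
    nlinarith
  have m1 : mix a h c (-1, 1) ≤ 0.63693 := by
    have hw : wt a h c (-1, 1) ≤ (5 / 4 : ℝ)⁻¹ ^ 3 := by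
      refine wt_le_of_le (by norm_num) ?_
      have h1 : (a / 2) ^ 2 ≤ (a * (-1 + c)) ^ 2 := by
        have : (a * (-1 + c)) ^ 2 = a ^ 2 * (1 - c) ^ 2 := by ring
        rw [this]
        have : (1 / 2) ^ 2 ≤ (1 - c) ^ 2 := pow_le_pow_left₀ (by norm_num) (by linarith) 2
        nlinarith [mul_le_mul_of_nonneg_left this (sq_nonneg a)]
      have h2 : 5 / 4 ≤ (a / 2) ^ 2 + h ^ 2 := by
        have hy1 : a ^ 2 ≤ 1 := by nlinarith
        have h4 : 1 ≤ a ^ 2 * h ^ 2 := by nlinarith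
        have h5 : 0 ≤ a ^ 2 * ((a / 2) ^ 2 + h ^ 2 - 5 / 4) := by nlinarith
        have := nonneg_of_mul_nonneg_right h5 (by positivity : 0 < a ^ 2)
        linarith
      simp only [quad]
      norm_num
      linarith
    norm_num at hw
    simp only [mix]
    norm_num
    nlinarith
  have key : ∀ (m : ℤ) (d : ℝ), 0 < d → d / 2 ≤ |(m : ℝ) + c| →
      mix a h c (m, 1) ≤ 3 / 2 * (d ^ 3)⁻¹ := by
    intro m d hd hdm
    refine (mix_le a h c _).trans (mul_le_mul_of_nonneg_left ?_ (by norm_num))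
    have h1 := quad_ge_prod r (m := m) (n := 1) zero_le_one (by positivity : 0 ≤ d / 2)
      (by simpa using hdm)
    rw [← inv_pow]
    refine wt_le_of_le hd (le_trans ?_ h1)
    push_cast
    nlinarith
  refine (tsum_interlaced_le hs m0 m1 (fun k => key _ _ (by positivity) ?_)
    fun k => key _ _ (by positivity) ?_).trans (by norm_num)
  · push_cast
    refine le_trans ?_ (le_abs_self _)
    linarith
  · push_cast
    refine le_trans ?_ (neg_le_abs _)
    linarith

lemma mix_far_rows {a h c : ℝ} (r : Reduced a h c) (ha1 : a ≤ 1) (hA : 1 ≤ a * h) :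
    ∑' k : ℕ, ∑' m : ℤ, mix a h c (m, (k : ℤ) + 2) ≤ 3 * 0.01872 + 29 / 64 * (5 / 24) := by
  have hh : 1 ≤ h := by nlinarith [r.h_pos, r.a_pos]
  refine tsum_far_rows_le (F := fun n => ∑' m : ℤ, mix a h c (m, n))
    (tsum_rows (summable_mix r) fun p => by rw [mix, wt_neg, mix]).1 (by norm_num) (by norm_num)
    fun k => ?_
  have h1 : ∑' m : ℤ, mix a h c (m, (k : ℤ) + 2)
      ≤ ∑' m : ℤ, 3 / 2 * wt a h c (m, (k : ℤ) + 2) :=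
    Summable.tsum_le_tsum (fun m => mix_le a h c _) (summable_row (summable_mix r) _)
      ((summable_row (summable_wt r) _).mul_left _)
  rw [tsum_mul_left] at h1
  have h2 := row_le r (n := (k : ℤ) + 2) (by positivity) (D := ((k : ℝ) + 2) ^ 2) (B := 2)
    (by positivity) two_pos (fun m => by
      refine le_trans ?_ (quad_ge_height a h c m _)
      push_cast
      nlinarith [mul_nonneg (sub_nonneg.2 hh) (sq_nonneg ((k : ℝ) + 2)), sq_nonneg ((k : ℝ) + 2),
        mul_nonneg (mul_nonneg (sub_nonneg.2 hh) (sub_nonneg.2 hh)) (sq_nonneg ((k : ℝ) + 2))])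
    (by linarith)
  refine (h1.trans (mul_le_mul_of_nonneg_left h2 (by norm_num))).trans_eq ?_
  push_cast
  field_simp
  ring

lemma area_lt {a h c : ℝ} (r : Reduced a h c) (heq : zeta12 a h c = zeta6 a h c)
    (hE : zeta12 a h c - 2 * zeta6 a h c ≤ -6.62) : a * h < 1 := by
  by_contra! hA
  have ha1 := a_le_one r heq
  have h := (tsum_rows (summable_mix r) fun p => by rw [mix, wt_neg, mix]).2
  rw [tsum_mix r heq] at h
  have h0 := mix_row_zero r
  have h1 := mix_row_one r ha1 hA
  have h2 := mix_far_rows r ha1 hA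
  norm_num at h0 h1 h2 hE
  linarith

/-- The area of a global minimizer of the Lennard-Jones energy among Bravais lattices
satisfies `0.47468 < |L₀| < 1`. -/
theorem global_minimizer_area_bounds (L₀ : Set R2) (h₀ : IsBravais L₀)
    (hmin : ∀ L : Set R2, IsBravais L → ELJ L₀ ≤ ELJ L)
    (A : ℝ) (hA : HasArea L₀ A) :
    0.47468 < A ∧ A < 1 := by
  obtain ⟨a, h, c, r, rfl, hL⟩ := exists_reduced hA
  have hmin' : ∀ a' h' c', Reduced a' h' c' →
      zeta12 a h c - 2 * zeta6 a h c ≤ zeta12 a' h' c' - 2 * zeta6 a' h' c' := by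
    intro a' h' c' r'
    obtain ⟨L, hB, hL'⟩ := exists_hasForm r'
    rw [← ELJ_eq r hL, ← ELJ_eq r' hL']
    exact hmin L hB
  have heq := zeta_eq_of_min r hmin'
  obtain ⟨rt, ht⟩ := triangular_energy
  exact ⟨area_gt r heq, area_lt r heq ((hmin' _ _ _ rt).trans ht)⟩
end
end
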